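/- Let V : ℝⁿ → ℝ be C² with e^{-V} integrable, and let μ be the probability measure with density proportional to e^{-V}. Let ρ : ℝⁿ → ℝ be continuous and bounded with ⟨u, Hess V(x) u⟩ ≥ ρ(x)‖u‖² for all x, u ∈ ℝⁿ, and suppose ρ(x) ≥ ρ₀ > 0 for all x and Osc(ρ) > 0. Set m = ∫ρ dμ and ε' = ((m − ρ₀) + Osc²(ρ)/ρ₀)·(1 − √(1 − (m − ρ₀)²/((m − ρ₀) + Osc²(ρ)/ρ₀)²)). Then μ satisfies a Poincaré inequality with constant 1/(ρ₀ + ε'): for every smooth compactly supported f : ℝⁿ → ℝ, Var_μ(f) ≤ (1/(ρ₀ + ε')) ∫‖∇f‖² dμ. -/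

import Mathlib

open MeasureTheory Real Set
open scoped ENNReal RealInnerProductSpace

/-!
Let `L = Δ - ⟪∇ V, ∇ ·⟫`, so that `-∫ v * L u ∂μ = ∫ ⟪∇ v, ∇ u⟫ ∂μ`. Bochner's identity writes
`∫ (L u) ^ 2 ∂μ` as the sum of the Dirichlet energies of the derivatives `∂ᵢ u` along an orthonormal
basis, plus the Hessian term, which is at least `∑ ∫ ρ * (∂ᵢ u) ^ 2 ∂μ`. Hence a lower bound `Λ` for
the quadratic form of the Schrödinger operator `-L + ρ` gives `Λ * ∫ ‖∇ u‖ ^ 2 ∂μ ≤ ∫ (L u) ^ 2 ∂μ`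
for test functions `u`, and the Poincaré inequality with constant `1 / Λ` follows by duality,
provided that the functions `L u` are dense in the centred part of `L²(μ)`.

Density is a Liouville theorem: if `g ∈ L²(μ)` is orthogonal to all `L u`, then `g` is constant. As
elliptic regularity is not at hand, `w = g * e ^ (-V)` is mollified, and in the Caccioppoli estimate
for `e ^ V * (η ⋆ w)` both the gradient of the cutoff and the commutator of the mollification with
the drift `∇ V` are made small on the support of the cutoff.

With `Λ = r = inf ρ` this is the Bakry–Émery bound. Fed back, it controls the distance of `h` to its
mean by its Dirichlet energy, so `h` cannot concentrate where `ρ` is close to `r`: the form of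
`-L + ρ` is bounded below by `r + r * (m - r) / (m + Osc)`, which is at least `ρ₀ + ε'`.
-/

section SelfImprovedBakryEmery

open Filter InnerProductSpace Topology
open scoped Gradient Laplacian Convolution ProbabilityTheory

section DirectionalDerivative

variable {E F : Type*} [NormedAddCommGroup E] [NormedSpace ℝ E]
  [NormedAddCommGroup F] [NormedSpace ℝ F]

/-- The derivative of `f` in the direction `v`, as a function of the base point. Unlike `lineDeriv`
it is read off the Fréchet derivative, so it is linear in `v` for every `f`. -/
noncomputable def dirDeriv (v : E) (f : E → F) (x : E) : F :=
  fderiv ℝ f x v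

/-- The test functions, that is, the smooth compactly supported functions. -/
structure IsTestFunction (u : E → ℝ) : Prop where
  contDiff : ContDiff ℝ (⊤ : ℕ∞) u
  hasCompactSupport : HasCompactSupport u

theorem contDiff_dirDeriv {f : E → F} {k l : WithTop ℕ∞} (hf : ContDiff ℝ l f) (hkl : k + 1 ≤ l)
    (v : E) : ContDiff ℝ k (dirDeriv v f) :=
  (hf.fderiv_right hkl).clm_apply contDiff_const

theorem continuous_dirDeriv {f : E → F} (hf : ContDiff ℝ 1 f) (v : E) :
    Continuous (dirDeriv v f) :=
  (contDiff_dirDeriv (k := 0) hf (by norm_num) v).continuous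

theorem hasCompactSupport_dirDeriv {f : E → F} (hf : HasCompactSupport f) (v : E) :
    HasCompactSupport (dirDeriv v f) :=
  hf.fderiv_apply ℝ v

theorem fderiv_dirDeriv {f : E → F} (hf : ContDiff ℝ 2 f) (v w x : E) :
    fderiv ℝ (dirDeriv v f) x w = fderiv ℝ (fderiv ℝ f) x w v := by
  have hd : DifferentiableAt ℝ (fderiv ℝ f) x :=
    (hf.fderiv_right (m := 1) (by norm_num)).differentiable (by norm_num) x
  have h : HasFDerivAt (dirDeriv v f) _ x := hd.hasFDerivAt.clm_apply (hasFDerivAt_const v x)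
  simp [h.fderiv]

theorem dirDeriv_comm {f : E → F} (hf : ContDiff ℝ 2 f) (v w : E) :
    dirDeriv v (dirDeriv w f) = dirDeriv w (dirDeriv v f) := by
  ext x
  simpa only [dirDeriv, ← fderiv_dirDeriv hf] using
    hf.contDiffAt.isSymmSndFDerivAt (by simp) v w

theorem dirDeriv_comp_const_sub {f : E → F} (hf : Differentiable ℝ f) (a v x : E) :
    dirDeriv v (fun y => f (a - y)) x = -dirDeriv v f (a - x) := by
  have h : HasFDerivAt (fun y => f (a - y)) _ x :=
    (hf (a - x)).hasFDerivAt.comp x ((hasFDerivAt_id x).const_sub a)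
  simp [dirDeriv, h.fderiv]

namespace IsTestFunction

variable {u v : E → ℝ}

theorem contDiff_one (hu : IsTestFunction u) : ContDiff ℝ 1 u :=
  contDiff_infty.1 hu.contDiff 1

theorem contDiff_two (hu : IsTestFunction u) : ContDiff ℝ 2 u :=
  contDiff_infty.1 hu.contDiff 2

theorem continuous (hu : IsTestFunction u) : Continuous u :=
  hu.contDiff.continuous

theorem add (hu : IsTestFunction u) (hv : IsTestFunction v) : IsTestFunction (u + v) :=
  ⟨hu.contDiff.add hv.contDiff, hu.hasCompactSupport.add hv.hasCompactSupport⟩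

theorem const_smul (hu : IsTestFunction u) (c : ℝ) : IsTestFunction (c • u) :=
  ⟨hu.contDiff.const_smul c, hu.hasCompactSupport.mono (Function.support_const_smul_subset c u)⟩

protected theorem dirDeriv (hu : IsTestFunction u) (e : E) : IsTestFunction (dirDeriv e u) :=
  ⟨contDiff_dirDeriv hu.contDiff (by norm_cast) e,
    hasCompactSupport_dirDeriv hu.hasCompactSupport e⟩

theorem comp_const_sub (hu : IsTestFunction u) (x : E) : IsTestFunction fun y => u (x - y) :=
  ⟨hu.contDiff.comp (contDiff_const.sub contDiff_id),
    hu.hasCompactSupport.comp_homeomorph (Homeomorph.subLeft x)⟩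

end IsTestFunction

end DirectionalDerivative

section Gradient

variable {E : Type*} [NormedAddCommGroup E] [InnerProductSpace ℝ E]

theorem dirDeriv_inner_left {P : E → E} {x : E} (hP : DifferentiableAt ℝ P x) (v w : E) :
    dirDeriv w (fun y => ⟪v, P y⟫) x = ⟪v, dirDeriv w P x⟫ := by
  simp [dirDeriv, fderiv_inner_apply ℝ (differentiableAt_const v) hP]

/-- The divergence of a vector field. -/
noncomputable def divergence (P : E → E) (x : E) : ℝ :=
  LinearMap.trace ℝ E (fderiv ℝ P x)

theorem divergence_eq_sum {ι : Type*} [Fintype ι] (b : OrthonormalBasis ι ℝ E) (P : E → E) (x : E) :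
    divergence P x = ∑ i, ⟪b i, dirDeriv (b i) P x⟫ :=
  LinearMap.trace_eq_sum_inner (fderiv ℝ P x).toLinearMap b

theorem hasCompactSupport_divergence {P : E → E} (hs : HasCompactSupport P) :
    HasCompactSupport (divergence P) :=
  (hs.fderiv ℝ).mono fun x hx h => hx (by simp [divergence, h])

theorem divergence_add {P Q : E → E} {x : E} (hP : DifferentiableAt ℝ P x)
    (hQ : DifferentiableAt ℝ Q x) :
    divergence (fun y => P y + Q y) x = divergence P x + divergence Q x := by
  simp [divergence, fderiv_fun_add hP hQ]

variable [FiniteDimensional ℝ E]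

theorem contDiff_gradient {f : E → ℝ} {k l : WithTop ℕ∞} (hf : ContDiff ℝ l f) (hkl : k + 1 ≤ l) :
    ContDiff ℝ k (∇ f) :=
  (toDual ℝ E).symm.contDiff.comp (hf.fderiv_right hkl)

theorem continuous_gradient {f : E → ℝ} (hf : ContDiff ℝ 1 f) : Continuous (∇ f) :=
  (contDiff_gradient (k := 0) hf (by norm_num)).continuous

theorem gradient_eq_zero_of_notMem_tsupport {f : E → ℝ} {x : E} (hx : x ∉ tsupport f) :
    ∇ f x = 0 := by
  simp [gradient, fderiv_of_notMem_tsupport ℝ hx]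

theorem hasCompactSupport_gradient {f : E → ℝ} (hf : HasCompactSupport f) :
    HasCompactSupport (∇ f) :=
  hf.mono' fun _ hx => not_imp_comm.1 gradient_eq_zero_of_notMem_tsupport hx

theorem inner_gradient_eq_dirDeriv (v : E) (f : E → ℝ) (x : E) : ⟪v, ∇ f x⟫ = dirDeriv v f x := by
  simp [dirDeriv, inner_gradient_right]

theorem norm_gradient_sq {ι : Type*} [Fintype ι] (b : OrthonormalBasis ι ℝ E) (f : E → ℝ) (x : E) :
    ‖∇ f x‖ ^ 2 = ∑ i, dirDeriv (b i) f x ^ 2 := by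
  rw [← b.sum_sq_norm_inner_right]
  simp [dirDeriv]

theorem inner_gradient_gradient {ι : Type*} [Fintype ι] (b : OrthonormalBasis ι ℝ E)
    (f g : E → ℝ) (x : E) :
    ⟪∇ f x, ∇ g x⟫ = ∑ i, dirDeriv (b i) f x * dirDeriv (b i) g x := by
  rw [← b.sum_inner_mul_inner]
  simp [dirDeriv, inner_gradient_left, inner_gradient_right]

theorem gradient_mul {f g : E → ℝ} {x : E} (hf : DifferentiableAt ℝ f x)
    (hg : DifferentiableAt ℝ g x) :
    ∇ (fun y => f y * g y) x = f x • ∇ g x + g x • ∇ f x := by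
  simp [gradient, fderiv_fun_mul hf hg]

theorem gradient_exp {f : E → ℝ} {x : E} (hf : DifferentiableAt ℝ f x) :
    ∇ (fun y => exp (f y)) x = exp (f x) • ∇ f x := by
  simp [gradient, fderiv_exp hf]

theorem gradient_exp_mul {f g : E → ℝ} {x : E} (hf : DifferentiableAt ℝ f x)
    (hg : DifferentiableAt ℝ g x) :
    ∇ (fun y => exp (f y) * g y) x = exp (f x) • (∇ g x + g x • ∇ f x) := by
  rw [gradient_mul hf.exp hg, gradient_exp hf]
  module

theorem laplacian_eq_sum_dirDeriv {ι : Type*} [Fintype ι] (b : OrthonormalBasis ι ℝ E)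
    {f : E → ℝ} (hf : ContDiff ℝ 2 f) (x : E) :
    Δ f x = ∑ i, dirDeriv (b i) (dirDeriv (b i) f) x := by
  simp [laplacian_eq_iteratedFDeriv_orthonormalBasis f b, iteratedFDeriv_two_apply, dirDeriv,
    ← fderiv_dirDeriv hf]

theorem continuous_divergence {P : E → E} (hP : ContDiff ℝ 1 P) : Continuous (divergence P) := by
  simp only [funext (divergence_eq_sum (stdOrthonormalBasis ℝ E) P)]
  exact continuous_finsetSum _ fun i _ => continuous_const.inner (continuous_dirDeriv hP _)

theorem divergence_smul {f : E → ℝ} {P : E → E} {x : E} (hf : DifferentiableAt ℝ f x)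
    (hP : DifferentiableAt ℝ P x) :
    divergence (fun y => f y • P y) x = f x * divergence P x + ⟪∇ f x, P x⟫ := by
  simp [divergence_eq_sum (stdOrthonormalBasis ℝ E), dirDeriv, fderiv_fun_smul hf hP,
    inner_add_right, inner_smul_right, Finset.sum_add_distrib, Finset.mul_sum,
    ← (stdOrthonormalBasis ℝ E).sum_inner_mul_inner (∇ f x) (P x), inner_gradient_left]

theorem divergence_gradient {f : E → ℝ} (hf : ContDiff ℝ 2 f) (x : E) :
    divergence (∇ f) x = Δ f x := by
  have hP : Differentiable ℝ (∇ f) :=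
    (contDiff_gradient (k := 1) hf (by norm_num)).differentiable one_ne_zero
  rw [divergence_eq_sum (stdOrthonormalBasis ℝ E),
    laplacian_eq_sum_dirDeriv (stdOrthonormalBasis ℝ E) hf]
  refine Finset.sum_congr rfl fun i _ => ?_
  simp only [← dirDeriv_inner_left (hP x), inner_gradient_eq_dirDeriv]

end Gradient

section IntegrationByParts

variable {E : Type*} [NormedAddCommGroup E] [InnerProductSpace ℝ E] [FiniteDimensional ℝ E]
  [MeasurableSpace E] [BorelSpace E]

theorem integral_dirDeriv_eq_zero {f : E → ℝ} (hf : ContDiff ℝ 1 f) (hs : HasCompactSupport f)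
    (v : E) : ∫ x, dirDeriv v f x = 0 := by
  have h := integral_mul_fderiv_eq_neg_fderiv_mul_of_integrable (μ := volume) (v := v)
    (f := fun _ : E => (1 : ℝ)) (g := f) (by simp)
    (by
      simp only [one_mul]
      exact (continuous_dirDeriv hf v).integrable_of_hasCompactSupport
        (hasCompactSupport_dirDeriv hs v))
    (by simpa only [one_mul] using hf.continuous.integrable_of_hasCompactSupport hs)
    (by fun_prop) (fun x _ => hf.differentiable one_ne_zero x)
  simpa [dirDeriv] using h

theorem integral_divergence_eq_zero {P : E → E} (hP : ContDiff ℝ 1 P) (hs : HasCompactSupport P) :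
    ∫ x, divergence P x = 0 := by
  set b := stdOrthonormalBasis ℝ E
  have hcomp (i) (x) : ⟪b i, dirDeriv (b i) P x⟫ = dirDeriv (b i) (fun y => ⟪b i, P y⟫) x :=
    (dirDeriv_inner_left (hP.differentiable one_ne_zero x) _ _).symm
  have hdiff (i) : ContDiff ℝ 1 fun y => ⟪b i, P y⟫ := contDiff_const.inner ℝ hP
  have hsupp (i) : HasCompactSupport fun y => ⟪b i, P y⟫ :=
    hs.comp_left (g := fun z => ⟪b i, z⟫) (inner_zero_right _)
  simp only [divergence_eq_sum b, hcomp]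
  rw [integral_finsetSum _ fun i _ => (continuous_dirDeriv (hdiff i) _)
    |>.integrable_of_hasCompactSupport (hasCompactSupport_dirDeriv (hsupp i) _)]
  exact Finset.sum_eq_zero fun i _ => integral_dirDeriv_eq_zero (hdiff i) (hsupp i) _

theorem integral_mul_divergence {φ : E → ℝ} {P : E → E} (hφ : ContDiff ℝ 1 φ)
    (hP : ContDiff ℝ 1 P) (hs : HasCompactSupport φ ∨ HasCompactSupport P) :
    ∫ x, φ x * divergence P x = -∫ x, ⟪∇ φ x, P x⟫ := by
  have hprod (x) : divergence (fun y => φ y • P y) x = φ x * divergence P x + ⟪∇ φ x, P x⟫ :=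
    divergence_smul (hφ.differentiable one_ne_zero x) (hP.differentiable one_ne_zero x)
  have hdiv : Integrable fun x => φ x * divergence P x :=
    (hφ.continuous.mul (continuous_divergence hP)).integrable_of_hasCompactSupport <|
      hs.elim (fun h => h.mul_right) fun h => (hasCompactSupport_divergence h).mul_left
  have hinner : Integrable fun x => ⟪∇ φ x, P x⟫ :=
    ((continuous_gradient hφ).inner hP.continuous).integrable_of_hasCompactSupport <|
      hs.elim (fun h => (hasCompactSupport_gradient h).mono fun x hx h => hx (by simp [h]))
        fun h => h.mono fun x hx h => hx (by simp [h])
  have h := integral_divergence_eq_zero (P := fun y => φ y • P y) (hφ.smul hP)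
    (hs.elim (fun h => h.smul_right) fun h => h.smul_left)
  simp only [hprod] at h
  rw [integral_add hdiv hinner] at h
  linarith

end IntegrationByParts

section Generator

variable {E : Type*} [NormedAddCommGroup E] [InnerProductSpace ℝ E] [FiniteDimensional ℝ E]
  {V u v : E → ℝ}

/-- The generator `L = Δ - ⟪∇V, ∇·⟫` of the Langevin diffusion in the potential `V`. -/
noncomputable def generator (V u : E → ℝ) (x : E) : ℝ :=
  Δ u x - ⟪∇ V x, ∇ u x⟫

theorem contDiff_laplacian {k l : WithTop ℕ∞} (hu : ContDiff ℝ l u) (hkl : k + 2 ≤ l) :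
    ContDiff ℝ k (Δ u) := by
  have h2 : k + 1 + 1 ≤ l := by rwa [add_assoc, one_add_one_eq_two]
  rw [funext (laplacian_eq_sum_dirDeriv (stdOrthonormalBasis ℝ E)
    (hu.of_le (le_add_self.trans hkl)))]
  exact ContDiff.sum fun i _ => contDiff_dirDeriv (contDiff_dirDeriv hu h2 _) le_rfl _

theorem generator_eq_zero_of_notMem_tsupport {x : E} (hx : x ∉ tsupport u) :
    generator V u x = 0 := by
  have hlap : Δ u x = 0 := by
    rw [(laplacian_congr_nhds (notMem_tsupport_iff_eventuallyEq.1 hx)).eq_of_nhds]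
    exact congrFun (laplacian_const (E := E) (c := (0 : ℝ))) x
  simp [generator, hlap, gradient_eq_zero_of_notMem_tsupport hx]

theorem hasCompactSupport_generator (hu : HasCompactSupport u) :
    HasCompactSupport (generator V u) :=
  hu.mono' fun _ hx => not_imp_comm.1 generator_eq_zero_of_notMem_tsupport hx

theorem contDiff_generator (hV : ContDiff ℝ 2 V) (hu : ContDiff ℝ 3 u) :
    ContDiff ℝ 1 (generator V u) :=
  (contDiff_laplacian hu (by norm_num)).sub
    ((contDiff_gradient hV (by norm_num)).inner ℝ (contDiff_gradient hu (by norm_num)))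

theorem continuous_generator (hV : ContDiff ℝ 1 V) (hu : ContDiff ℝ 2 u) :
    Continuous (generator V u) :=
  (contDiff_laplacian (k := 0) hu (by norm_num)).continuous.sub
    ((continuous_gradient hV).inner (continuous_gradient (hu.of_le (by norm_num))))

theorem generator_comp_const_sub (hu : ContDiff ℝ 2 u) (x y : E) :
    generator V (fun z => u (x - z)) y = Δ u (x - y) + ⟪∇ V y, ∇ u (x - y)⟫ := by
  set b := stdOrthonormalBasis ℝ E
  have hu' : ContDiff ℝ 2 fun z => u (x - z) := hu.comp (contDiff_const.sub contDiff_id)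
  have hderiv (v : E) : dirDeriv v (fun z => u (x - z)) = fun z => -dirDeriv v u (x - z) :=
    funext (dirDeriv_comp_const_sub (hu.differentiable two_ne_zero) x v)
  have hgrad : ∇ (fun z => u (x - z)) y = -∇ u (x - y) := by
    refine ext_inner_left ℝ fun v => ?_
    rw [inner_gradient_eq_dirDeriv, hderiv, inner_neg_right, inner_gradient_eq_dirDeriv]
  have hlap : Δ (fun z => u (x - z)) y = Δ u (x - y) := by
    simp only [laplacian_eq_sum_dirDeriv b hu', laplacian_eq_sum_dirDeriv b hu, hderiv]
    refine Finset.sum_congr rfl fun i _ => ?_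
    have hd := dirDeriv_comp_const_sub
      ((contDiff_dirDeriv (k := 1) hu (by norm_num) (b i)).differentiable one_ne_zero) x (b i) y
    rw [dirDeriv] at hd ⊢
    rw [fderiv_fun_neg, neg_apply, hd, neg_neg]
  rw [generator, hlap, hgrad, inner_neg_right, sub_neg_eq_add]

theorem generator_add (hu : ContDiff ℝ 2 u) (hv : ContDiff ℝ 2 v) :
    generator V (u + v) = generator V u + generator V v := by
  ext x
  have hgrad : ∇ (u + v) x = ∇ u x + ∇ v x := by
    simp [gradient, fderiv_add (hu.differentiable two_ne_zero x) (hv.differentiable two_ne_zero x)]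
  simp only [generator, Pi.add_apply, hu.contDiffAt.laplacian_add hv.contDiffAt, hgrad,
    inner_add_right]
  ring

theorem generator_const_smul (c : ℝ) (hu : ContDiff ℝ 2 u) :
    generator V (c • u) = c • generator V u := by
  ext x
  have hgrad : ∇ (c • u) x = c • ∇ u x := by
    simp [gradient, fderiv_const_smul (hu.differentiable two_ne_zero x)]
  simp only [generator, Pi.smul_apply, laplacian_smul c hu.contDiffAt, hgrad, inner_smul_right,
    smul_eq_mul]
  ring

theorem dirDeriv_laplacian (hu : ContDiff ℝ 3 u) (e : E) :
    dirDeriv e (Δ u) = Δ (dirDeriv e u) := by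
  set b := stdOrthonormalBasis ℝ E
  have h2 (v : E) : ContDiff ℝ 2 (dirDeriv v u) := contDiff_dirDeriv hu (by norm_num) v
  have h1 (v w : E) : ContDiff ℝ 1 (dirDeriv v (dirDeriv w u)) :=
    contDiff_dirDeriv (h2 w) (by norm_num) v
  ext x
  have hsum : dirDeriv e (Δ u) x = ∑ i, dirDeriv e (dirDeriv (b i) (dirDeriv (b i) u)) x := by
    rw [funext (laplacian_eq_sum_dirDeriv b (hu.of_le (by norm_num))), dirDeriv,
      fderiv_fun_sum fun i _ => (h1 (b i) (b i)).differentiable one_ne_zero x, sum_apply]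
    rfl
  rw [hsum, laplacian_eq_sum_dirDeriv b (h2 e)]
  refine Finset.sum_congr rfl fun i _ => ?_
  rw [dirDeriv_comm (h2 _), dirDeriv_comm (hu.of_le (by norm_num)) e]

theorem inner_dirDeriv_gradient (hu : ContDiff ℝ 2 u) (e w x : E) :
    ⟪w, dirDeriv e (∇ u) x⟫ = fderiv ℝ (fderiv ℝ u) x e w := by
  have hd : Differentiable ℝ (∇ u) :=
    (contDiff_gradient (k := 1) hu (by norm_num)).differentiable one_ne_zero
  simp only [← dirDeriv_inner_left (hd x), inner_gradient_eq_dirDeriv, ← fderiv_dirDeriv hu]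
  rfl

theorem dirDeriv_gradient (hu : ContDiff ℝ 2 u) (e x : E) :
    dirDeriv e (∇ u) x = ∇ (dirDeriv e u) x := by
  refine ext_inner_left ℝ fun w => ?_
  rw [inner_dirDeriv_gradient hu, inner_gradient_eq_dirDeriv, dirDeriv_comm hu, dirDeriv,
    fderiv_dirDeriv hu]

theorem dirDeriv_generator (hV : ContDiff ℝ 2 V) (hu : ContDiff ℝ 3 u) (e x : E) :
    dirDeriv e (generator V u) x =
      generator V (dirDeriv e u) x - fderiv ℝ (fderiv ℝ V) x e (∇ u x) := by
  have hu2 : ContDiff ℝ 2 u := hu.of_le (by norm_num)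
  have hlap : DifferentiableAt ℝ (Δ u) x :=
    (contDiff_laplacian (k := 1) hu (by norm_num)).differentiable one_ne_zero x
  have hgrad {f : E → ℝ} (hf : ContDiff ℝ 2 f) : DifferentiableAt ℝ (∇ f) x :=
    (contDiff_gradient (k := 1) hf (by norm_num)).differentiable one_ne_zero x
  have hinner : dirDeriv e (fun y => ⟪∇ V y, ∇ u y⟫) x =
      ⟪∇ V x, dirDeriv e (∇ u) x⟫ + ⟪dirDeriv e (∇ V) x, ∇ u x⟫ :=
    fderiv_inner_apply ℝ (hgrad hV) (hgrad hu2) e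
  have hsub : dirDeriv e (generator V u) x =
      dirDeriv e (Δ u) x - dirDeriv e (fun y => ⟪∇ V y, ∇ u y⟫) x := by
    simp only [dirDeriv]
    rw [← sub_apply]
    exact congrArg (· e) (fderiv_fun_sub hlap ((hgrad hV).inner ℝ (hgrad hu2)))
  rw [hsub, hinner, dirDeriv_laplacian hu, dirDeriv_gradient hu2, real_inner_comm (∇ u x),
    inner_dirDeriv_gradient hV, generator]
  ring

theorem divergence_exp_neg_smul_gradient (hV : ContDiff ℝ 1 V) (hu : ContDiff ℝ 2 u) (x : E) :
    divergence (fun y => exp (-V y) • ∇ u y) x = exp (-V x) * generator V u x := by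
  have hexp : ∇ (fun y => exp (-V y)) x = -exp (-V x) • ∇ V x := by
    rw [gradient_exp (hV.neg.differentiable one_ne_zero x)]
    simp [gradient]
  rw [divergence_smul (hV.neg.exp.differentiable one_ne_zero x)
    ((contDiff_gradient (k := 1) hu (by norm_num)).differentiable one_ne_zero x), hexp,
    divergence_gradient hu, inner_smul_left, generator]
  simp
  ring

theorem inner_gradient_generator {ι : Type*} [Fintype ι] (b : OrthonormalBasis ι ℝ E)
    (hV : ContDiff ℝ 2 V) (hu : ContDiff ℝ 3 u) (x : E) :
    ⟪∇ (generator V u) x, ∇ u x⟫ =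
      ∑ i, dirDeriv (b i) u x * generator V (dirDeriv (b i) u) x -
        fderiv ℝ (fderiv ℝ V) x (∇ u x) (∇ u x) := by
  have hcoord : ∇ u x = ∑ i, dirDeriv (b i) u x • b i := by
    simp only [← inner_gradient_eq_dirDeriv, b.sum_repr' (∇ u x)]
  have hHess : ∑ i, dirDeriv (b i) u x * fderiv ℝ (fderiv ℝ V) x (b i) (∇ u x) =
      fderiv ℝ (fderiv ℝ V) x (∇ u x) (∇ u x) := by
    simpa using (congrArg (fun w => fderiv ℝ (fderiv ℝ V) x w (∇ u x)) hcoord).symm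
  simp only [inner_gradient_gradient b, dirDeriv_generator hV hu, Finset.sum_sub_distrib,
    mul_comm _ (dirDeriv _ u x), mul_sub, hHess]

end Generator

section GibbsMeasure

variable {E : Type*} [NormedAddCommGroup E] [InnerProductSpace ℝ E] [FiniteDimensional ℝ E]
  [MeasurableSpace E] [BorelSpace E] {V u v : E → ℝ}

/-- The probability measure with density proportional to `e^{-V}`; it is the zero measure when
`e^{-V}` is not integrable. -/
noncomputable abbrev gibbsMeasure (V : E → ℝ) : Measure E :=
  volume.tilted fun x => -V x

theorem integral_gibbsMeasure (V g : E → ℝ) :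
    ∫ x, g x ∂gibbsMeasure V = (∫ x, exp (-V x))⁻¹ * ∫ x, exp (-V x) * g x := by
  rw [integral_tilted, ← integral_const_mul]
  refine integral_congr_ae (ae_of_all _ fun x => ?_)
  simp only [smul_eq_mul]
  ring

theorem integral_mul_generator (hV : ContDiff ℝ 1 V) (hu : ContDiff ℝ 2 u)
    (hs : HasCompactSupport u) (hv : ContDiff ℝ 1 v) :
    ∫ x, v x * generator V u x ∂gibbsMeasure V = -∫ x, ⟪∇ v x, ∇ u x⟫ ∂gibbsMeasure V := by
  have hP : ContDiff ℝ 1 fun y => exp (-V y) • ∇ u y :=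
    hV.neg.exp.smul (contDiff_gradient hu (by norm_num))
  have h := integral_mul_divergence hv hP (.inr (hasCompactSupport_gradient hs).smul_left)
  simp only [divergence_exp_neg_smul_gradient hV hu, inner_smul_right,
    mul_left_comm (v _)] at h
  rw [integral_gibbsMeasure, integral_gibbsMeasure, h, mul_neg]

theorem integrable_fderiv_fderiv_gradient (hV : ContDiff ℝ 2 V) (hu : IsTestFunction u) :
    Integrable (fun x => fderiv ℝ (fderiv ℝ V) x (∇ u x) (∇ u x)) (gibbsMeasure V) := by
  have hcont : Continuous (fderiv ℝ (fderiv ℝ V)) :=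
    (hV.fderiv_right (m := 1) (by norm_num)).continuous_fderiv one_ne_zero
  have hgrad := continuous_gradient hu.contDiff_one
  exact ((hcont.clm_apply hgrad).clm_apply hgrad).integrable_of_hasCompactSupport <|
    (hasCompactSupport_gradient hu.hasCompactSupport).mono fun x hx h => hx (by simp [h])

/-- Bochner's identity, integrated against the Gibbs measure. -/
theorem integral_generator_sq {ι : Type*} [Fintype ι] (b : OrthonormalBasis ι ℝ E)
    (hV : ContDiff ℝ 2 V) (hu : IsTestFunction u) :
    ∫ x, generator V u x ^ 2 ∂gibbsMeasure V =
      ∑ i, ∫ x, ‖∇ (dirDeriv (b i) u) x‖ ^ 2 ∂gibbsMeasure V +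
        ∫ x, fderiv ℝ (fderiv ℝ V) x (∇ u x) (∇ u x) ∂gibbsMeasure V := by
  have hV₁ : ContDiff ℝ 1 V := hV.of_le (by norm_num)
  have hdiff (i) : IsTestFunction (dirDeriv (b i) u) := hu.dirDeriv (b i)
  have hterm (i) : Integrable (fun x => dirDeriv (b i) u x * generator V (dirDeriv (b i) u) x)
      (gibbsMeasure V) :=
    ((hdiff i).continuous.mul (continuous_generator hV₁ (hdiff i).contDiff_two))
      |>.integrable_of_hasCompactSupport (hdiff i).hasCompactSupport.mul_right
  have hibp := integral_mul_generator hV₁ hu.contDiff_two hu.hasCompactSupport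
    (contDiff_generator hV (contDiff_infty.1 hu.contDiff 3))
  simp only [inner_gradient_generator b hV (contDiff_infty.1 hu.contDiff 3), ← sq] at hibp
  rw [hibp, integral_sub (integrable_finsetSum _ fun i _ => hterm i)
    (integrable_fderiv_fderiv_gradient hV hu), integral_finsetSum _ fun i _ => hterm i]
  simp only [integral_mul_generator hV₁ (hdiff _).contDiff_two (hdiff _).hasCompactSupport
    (hdiff _).contDiff_one, real_inner_self_eq_norm_sq, Finset.sum_neg_distrib]
  ring

end GibbsMeasure

section CauchySchwarz

variable {α : Type*} [MeasurableSpace α] {μ : Measure α}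

theorem sq_integral_le_mul_of_sq_le {a b h : α → ℝ} (ha : Integrable a μ) (hb : Integrable b μ)
    (hh : Integrable h μ) (ha₀ : ∀ x, 0 ≤ a x) (hb₀ : ∀ x, 0 ≤ b x)
    (hab : ∀ x, h x ^ 2 ≤ a x * b x) :
    (∫ x, h x ∂μ) ^ 2 ≤ (∫ x, a x ∂μ) * ∫ x, b x ∂μ := by
  have hquad (t : ℝ) :
      0 ≤ (∫ x, a x ∂μ) * (t * t) + (2 * ∫ x, h x ∂μ) * t + ∫ x, b x ∂μ := by
    have hpt (x : α) : 0 ≤ a x * (t * t) + 2 * h x * t + b x := by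
      rcases (ha₀ x).eq_or_lt with hax | hax
      · have : h x = 0 := pow_eq_zero_iff two_ne_zero |>.1 <|
          le_antisymm (by simpa [← hax] using hab x) (sq_nonneg _)
        simp [← hax, this, hb₀ x]
      · refine nonneg_of_mul_nonneg_right ?_ hax
        nlinarith [hab x, sq_nonneg (a x * t + h x)]
    have hint : 0 ≤ ∫ x, a x * (t * t) + 2 * h x * t + b x ∂μ := integral_nonneg hpt
    have hat : Integrable (fun x => a x * (t * t)) μ := ha.mul_const _
    have hht : Integrable (fun x => 2 * h x * t) μ := (hh.const_mul 2).mul_const t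
    rwa [integral_add (f := fun x => a x * (t * t) + 2 * h x * t) (hat.add hht) hb,
      integral_add hat hht, integral_mul_const, integral_mul_const, integral_const_mul] at hint
  have := discrim_le_zero hquad
  rw [discrim] at this
  linarith

end CauchySchwarz

section Mollification

section Bump

variable {E : Type*} [NormedAddCommGroup E]

/-- A sequence of bump functions shrinking to the origin, whose ratio of radii is bounded. -/
noncomputable def shrinkingBump (k : ℕ) : ContDiffBump (0 : E) where
  rIn := 1 / (2 * (k + 1))
  rOut := 1 / (k + 1)
  rIn_pos := by positivity
  rIn_lt_rOut := by gcongr; linarith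

theorem tendsto_rOut_shrinkingBump :
    Tendsto (fun k => (shrinkingBump k : ContDiffBump (0 : E)).rOut) atTop (𝓝 0) :=
  tendsto_one_div_add_atTop_nhds_zero_nat

end Bump

variable {E F : Type*} [NormedAddCommGroup E] [InnerProductSpace ℝ E] [FiniteDimensional ℝ E]
  [MeasurableSpace E] [BorelSpace E] [NormedAddCommGroup F]
  [NormedSpace ℝ F] {η w : E → ℝ}

/-- Smooth, compactly supported, nonnegative kernels of total mass one. -/
structure IsMollifier (η : E → ℝ) : Prop extends IsTestFunction η where
  nonneg (x : E) : 0 ≤ η x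
  integral_eq_one : ∫ x, η x = 1

theorem IsMollifier.convolution_nonneg {f : E → ℝ} (hη : IsMollifier η) (hf : ∀ x, 0 ≤ f x)
    (x : E) : 0 ≤ (η ⋆ f) x :=
  integral_nonneg fun _ => mul_nonneg (hη.nonneg _) (hf _)

theorem dirDeriv_convolution {f : E → F} (hs : HasCompactSupport η) (hη : ContDiff ℝ 1 η)
    (hf : LocallyIntegrable f) (v x : E) : dirDeriv v (η ⋆ f) x = (dirDeriv v η ⋆ f) x := by
  have hint := (hs.fderiv ℝ).convolutionExists_left
    ((ContinuousLinearMap.lsmul ℝ ℝ : ℝ →L[ℝ] F →L[ℝ] F).precompL E)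
    (hη.continuous_fderiv one_ne_zero) hf x
  rw [dirDeriv, (hs.hasFDerivAt_convolution_left _ hη hf x).fderiv]
  exact ContinuousLinearMap.integral_apply hint v

theorem integral_convolution_mul_eq_convolution {φ : E → ℝ} (hsη : HasCompactSupport η)
    (hη : Continuous η) (hw : LocallyIntegrable w) (hsφ : HasCompactSupport φ)
    (hφ : Continuous φ) :
    ∫ x, (η ⋆ w) x * φ x = (η ⋆ (w ⋆ fun x => φ (-x))) 0 := by
  have hφ' : Continuous fun x => φ (-x) := hφ.comp continuous_neg
  have hsφ' : HasCompactSupport fun x => φ (-x) := hsφ.comp_homeomorph (Homeomorph.neg E)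
  have hw_norm : LocallyIntegrable fun x => ‖w x‖ := fun x => (hw x).norm
  rw [← convolution_assoc (ContinuousLinearMap.lsmul ℝ ℝ) (ContinuousLinearMap.lsmul ℝ ℝ)
    (ContinuousLinearMap.lsmul ℝ ℝ) (ContinuousLinearMap.lsmul ℝ ℝ)
    (fun a b c => smul_assoc a b c) hη.aestronglyMeasurable hw.aestronglyMeasurable
    hφ'.aestronglyMeasurable
    (ae_of_all _ (hsη.convolutionExists_left _ hη hw))
    (ae_of_all _ (hsφ'.norm.convolutionExists_right _ hw_norm hφ'.norm))
    (hsη.norm.convolutionExists_left _ hη.norm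
      (hsφ'.norm.continuous_convolution_right _ hw_norm hφ'.norm).locallyIntegrable 0)]
  simp [convolution_def]

theorem tendsto_integral_convolution_mul {ι : Type*} {l : Filter ι} {ψ : ι → ContDiffBump (0 : E)}
    {φ : E → ℝ} (hψ : Tendsto (fun i => (ψ i).rOut) l (𝓝 0)) (hw : LocallyIntegrable w)
    (hsφ : HasCompactSupport φ) (hφ : Continuous φ) :
    Tendsto (fun i => ∫ x, ((ψ i).normed volume ⋆ w) x * φ x) l (𝓝 (∫ x, w x * φ x)) := by
  have hφ' : Continuous fun x => φ (-x) := hφ.comp continuous_neg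
  have hsφ' : HasCompactSupport fun x => φ (-x) := hsφ.comp_homeomorph (Homeomorph.neg E)
  have hlim := ContDiffBump.convolution_tendsto_right_of_continuous (μ := volume) hψ
    (hsφ'.continuous_convolution_right (ContinuousLinearMap.lsmul ℝ ℝ) hw hφ') 0
  simp only [integral_convolution_mul_eq_convolution (ψ _).hasCompactSupport_normed
    (ψ _).continuous_normed hw hsφ hφ]
  simpa [convolution_def] using hlim

theorem ae_tendsto_convolution_shrinkingBump {f : E → ℝ} (hf : LocallyIntegrable f) :
    ∀ᵐ x, Tendsto (fun k => ((shrinkingBump k).normed volume ⋆ f) x) atTop (𝓝 (f x)) :=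
  ContDiffBump.ae_convolution_tendsto_right_of_locallyIntegrable (K := 2)
    tendsto_rOut_shrinkingBump (Eventually.of_forall fun k => by
      simp only [shrinkingBump]; field_simp; norm_num) hf

theorem isMollifier_normed (ψ : ContDiffBump (0 : E)) : IsMollifier (ψ.normed volume) :=
  ⟨⟨ψ.contDiff_normed, ψ.hasCompactSupport_normed⟩, ψ.nonneg_normed, ψ.integral_normed⟩

theorem ae_eq_const_of_integral_mul_dirDeriv_eq_zero {g : E → ℝ} (hg : LocallyIntegrable g)
    (hweak : ∀ θ, IsTestFunction θ → ∀ v, ∫ x, g x * dirDeriv v θ x = 0) :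
    ∃ c, g =ᵐ[volume] fun _ => c := by
  have hconst (k : ℕ) (x : E) : ((shrinkingBump k).normed volume ⋆ g) x =
      ((shrinkingBump k).normed volume ⋆ g) 0 := by
    have hη : IsTestFunction ((shrinkingBump k : ContDiffBump (0 : E)).normed volume) :=
      (isMollifier_normed _).toIsTestFunction
    refine is_const_of_fderiv_eq_zero ((hη.hasCompactSupport.contDiff_convolution_left _
      hη.contDiff_one hg).differentiable one_ne_zero) (fun x => ?_) x 0
    ext v
    have hzero := hweak _ (hη.comp_const_sub x) v
    simp only [dirDeriv_comp_const_sub (hη.contDiff_one.differentiable one_ne_zero), mul_neg,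
      integral_neg, neg_eq_zero] at hzero
    rw [← dirDeriv, dirDeriv_convolution hη.hasCompactSupport hη.contDiff_one hg,
      convolution_lsmul_swap]
    simpa only [smul_eq_mul, mul_comm, zero_apply] using hzero
  obtain ⟨c, hc⟩ : ∃ c, Tendsto (fun k => ((shrinkingBump k).normed volume ⋆ g) (0 : E)) atTop
      (𝓝 c) := by
    obtain ⟨x, hx⟩ := (ae_tendsto_convolution_shrinkingBump hg).exists
    exact ⟨g x, by simpa only [hconst _ x] using hx⟩
  refine ⟨c, ?_⟩
  filter_upwards [ae_tendsto_convolution_shrinkingBump hg] with x hx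
  exact tendsto_nhds_unique (by simpa only [hconst _ x] using hx) hc

end Mollification

section Stationary

variable {E : Type*} [NormedAddCommGroup E] [InnerProductSpace ℝ E] [FiniteDimensional ℝ E]
  [MeasurableSpace E] [BorelSpace E] {V w η : E → ℝ}

/-- The density `w` is a weak solution of the stationary Fokker–Planck equation `L* w = 0`, where
`L` is the generator of the Langevin diffusion in the potential `V`. -/
def IsStationaryDensity (V w : E → ℝ) : Prop :=
  ∀ u, IsTestFunction u → ∫ x, w x * generator V u x = 0

theorem laplacian_convolution (hη : IsTestFunction η) (hw : LocallyIntegrable w) (x : E) :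
    Δ (η ⋆ w) x = (Δ η ⋆ w) x := by
  set b := stdOrthonormalBasis ℝ E
  have hsmooth : ContDiff ℝ 2 (η ⋆ w) :=
    hη.hasCompactSupport.contDiff_convolution_left _ hη.contDiff_two hw
  have hderiv (v : E) : dirDeriv v (η ⋆ w) = dirDeriv v η ⋆ w :=
    funext (dirDeriv_convolution hη.hasCompactSupport hη.contDiff_one hw v)
  have hη2 (v : E) : IsTestFunction (dirDeriv v (dirDeriv v η)) := (hη.dirDeriv v).dirDeriv v
  have hint (i) : Integrable fun y => dirDeriv (b i) (dirDeriv (b i) η) (x - y) * w y :=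
    ((hη2 _).hasCompactSupport.convolutionExists_left (ContinuousLinearMap.lsmul ℝ ℝ)
      (hη2 _).continuous hw x).integrable_swap
  simp only [laplacian_eq_sum_dirDeriv b hsmooth, hderiv,
    dirDeriv_convolution (hη.dirDeriv _).hasCompactSupport (hη.dirDeriv _).contDiff_one hw,
    convolution_lsmul_swap, smul_eq_mul, laplacian_eq_sum_dirDeriv b hη.contDiff_two,
    Finset.sum_mul]
  exact (integral_finsetSum _ fun i _ => hint i).symm

theorem divergence_convolution {P : E → E} (hη : IsTestFunction η) (hP : LocallyIntegrable P)
    (x : E) : divergence (η ⋆ P) x = ∫ y, ⟪∇ η (x - y), P y⟫ := by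
  set b := stdOrthonormalBasis ℝ E
  have hint (i) : Integrable fun y => dirDeriv (b i) η (x - y) • P y :=
    ((hη.dirDeriv _).hasCompactSupport.convolutionExists_left (ContinuousLinearMap.lsmul ℝ ℝ)
      (hη.dirDeriv _).continuous hP x).integrable_swap
  simp only [divergence_eq_sum b, convolution_lsmul_swap,
    dirDeriv_convolution hη.hasCompactSupport hη.contDiff_one hP,
    ← integral_inner (hint _)]
  rw [← integral_finsetSum _ fun i _ => (hint i).const_inner (b i)]
  refine integral_congr_ae (ae_of_all _ fun y => ?_)
  simp only [inner_smul_right, ← inner_gradient_eq_dirDeriv]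
  rw [← b.sum_inner_mul_inner]
  simp only [real_inner_comm]

theorem divergence_flux_eq_zero (hV : ContDiff ℝ 1 V) (hw : LocallyIntegrable w)
    (hstat : IsStationaryDensity V w) (hη : IsTestFunction η) (x : E) :
    divergence (fun y => ∇ (η ⋆ w) y + (η ⋆ fun z => w z • ∇ V z) y) x = 0 := by
  have hP : LocallyIntegrable fun z => w z • ∇ V z :=
    hw.smul_continuous (continuous_gradient hV)
  have hηw : ContDiff ℝ 2 (η ⋆ w) :=
    hη.hasCompactSupport.contDiff_convolution_left _ hη.contDiff_two hw
  have hηP : ContDiff ℝ 1 (η ⋆ fun z => w z • ∇ V z) :=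
    hη.hasCompactSupport.contDiff_convolution_left _ hη.contDiff_one hP
  have hu : IsTestFunction fun z => η (x - z) := hη.comp_const_sub x
  have hgen_int : Integrable fun y => w y * generator V (fun z => η (x - z)) y := by
    simpa only [smul_eq_mul, mul_comm] using hw.integrable_smul_left_of_hasCompactSupport
      (continuous_generator hV hu.contDiff_two) (hasCompactSupport_generator hu.hasCompactSupport)
  have hgrad_int : Integrable fun y => ⟪∇ η (x - y), w y • ∇ V y⟫ := by
    have hcont : Continuous fun y => ⟪∇ η (x - y), ∇ V y⟫ :=
      ((continuous_gradient hη.contDiff_one).comp (continuous_const.sub continuous_id)).inner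
        (continuous_gradient hV)
    have hsupp : HasCompactSupport fun y => ⟪∇ η (x - y), ∇ V y⟫ :=
      ((hasCompactSupport_gradient hη.hasCompactSupport).comp_homeomorph
        (Homeomorph.subLeft x)).mono fun y hy h => hy (by
          simp only [Function.comp_apply, Homeomorph.subLeft_apply] at h
          simp only [h, inner_zero_left])
    simpa only [smul_eq_mul, mul_comm, inner_smul_right] using
      hw.integrable_smul_left_of_hasCompactSupport hcont hsupp
  rw [divergence_add ((contDiff_gradient hηw (by norm_num)).differentiable one_ne_zero x)
    (hηP.differentiable one_ne_zero x), divergence_gradient hηw, laplacian_convolution hη hw,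
    divergence_convolution hη hP, convolution_lsmul_swap]
  have hlap (y : E) : Δ η (x - y) • w y =
      w y * generator V (fun z => η (x - z)) y - ⟪∇ η (x - y), w y • ∇ V y⟫ := by
    rw [generator_comp_const_sub hη.contDiff_two, inner_smul_right, smul_eq_mul,
      real_inner_comm (∇ η (x - y))]
    ring
  simp only [hlap]
  rw [integral_sub hgen_int hgrad_int, hstat _ hu, zero_sub, neg_add_cancel]

end Stationary

section Caccioppoli

variable {E : Type*} [NormedAddCommGroup E] [InnerProductSpace ℝ E]

theorem norm_sq_le_inner_add_norm_sq (X Y Z : E) :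
    ‖X‖ ^ 2 ≤ 2 * ⟪X + (2 : ℝ) • Y, X - Z⟫ + (4 * ‖Y‖ ^ 2 + ‖Z‖ ^ 2) := by
  have hsq := sq_nonneg ‖X + (2 : ℝ) • Y - Z‖
  simp only [← real_inner_self_eq_norm_sq, inner_add_left, inner_add_right, inner_sub_left,
    inner_sub_right, real_inner_smul_left, real_inner_smul_right, real_inner_comm X Y,
    real_inner_comm X Z, real_inner_comm Y Z] at hsq ⊢
  linarith

variable [FiniteDimensional ℝ E] {ω χ γ : E → ℝ} {q : E → E}

theorem mul_sq_mul_norm_gradient_sq_le {x : E} (hχ : DifferentiableAt ℝ χ x)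
    (hγ : DifferentiableAt ℝ γ x) {a : ℝ} (ha : 0 ≤ a) (z : E) :
    a * (χ x ^ 2 * ‖∇ γ x‖ ^ 2) ≤
      2 * ⟪∇ (fun y => χ y * (χ y * γ y)) x, a • (∇ γ x - z)⟫ +
        a * (4 * (γ x ^ 2 * ‖∇ χ x‖ ^ 2) + χ x ^ 2 * ‖z‖ ^ 2) := by
  have hgrad : ∇ (fun y => χ y * (χ y * γ y)) x =
      χ x • (χ x • ∇ γ x + (2 : ℝ) • γ x • ∇ χ x) := by
    rw [gradient_mul hχ (hχ.fun_mul hγ), gradient_mul hχ hγ]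
    module
  have hXYZ := mul_le_mul_of_nonneg_left
    (norm_sq_le_inner_add_norm_sq (χ x • ∇ γ x) (γ x • ∇ χ x) (χ x • z)) ha
  rw [← smul_sub] at hXYZ
  simp only [norm_smul, mul_pow, norm_eq_abs, sq_abs, real_inner_smul_right, hgrad,
    real_inner_smul_left] at hXYZ ⊢
  linarith

variable [MeasurableSpace E] [BorelSpace E]

theorem integral_mul_sq_mul_norm_gradient_sq_le (hω : Continuous ω) (hω₀ : ∀ x, 0 ≤ ω x)
    (hχ : ContDiff ℝ 1 χ) (hs : HasCompactSupport χ) (hγ : ContDiff ℝ 1 γ) (hq : Continuous q)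
    (hP : ContDiff ℝ 1 fun x => ω x • (∇ γ x - q x))
    (hdiv : ∀ x, divergence (fun x => ω x • (∇ γ x - q x)) x = 0) :
    ∫ x, ω x * (χ x ^ 2 * ‖∇ γ x‖ ^ 2) ≤
      ∫ x, ω x * (4 * (γ x ^ 2 * ‖∇ χ x‖ ^ 2) + χ x ^ 2 * ‖q x‖ ^ 2) := by
  set φ : E → ℝ := fun x => χ x * (χ x * γ x)
  have hφ : ContDiff ℝ 1 φ := hχ.mul (hχ.mul hγ)
  have hsφ : HasCompactSupport φ := hs.mul_right
  have hweak : ∫ x, ⟪∇ φ x, ω x • (∇ γ x - q x)⟫ = 0 := by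
    simpa [hdiv] using integral_mul_divergence hφ hP (.inl hsφ)
  have hcγ := continuous_gradient hγ
  have hcχ := continuous_gradient hχ
  have hweak_int : Integrable fun x => ⟪∇ φ x, ω x • (∇ γ x - q x)⟫ :=
    ((continuous_gradient hφ).inner hP.continuous).integrable_of_hasCompactSupport
      ((hasCompactSupport_gradient hsφ).mono fun x hx h => hx (by simp [h]))
  have hlhs_int : Integrable fun x => ω x * (χ x ^ 2 * ‖∇ γ x‖ ^ 2) :=
    Continuous.integrable_of_hasCompactSupport (by fun_prop)
      (hs.mono fun x hx h => hx (by simp [h]))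
  have hrhs_int :
      Integrable fun x => ω x * (4 * (γ x ^ 2 * ‖∇ χ x‖ ^ 2) + χ x ^ 2 * ‖q x‖ ^ 2) := by
    refine Continuous.integrable_of_hasCompactSupport (by fun_prop)
      (hs.mono' fun x hx => by_contra fun h => hx ?_)
    simp [gradient_eq_zero_of_notMem_tsupport h, image_eq_zero_of_notMem_tsupport h]
  refine (integral_mono hlhs_int ((hweak_int.const_mul 2).add hrhs_int) fun x =>
    mul_sq_mul_norm_gradient_sq_le (hχ.differentiable one_ne_zero x)
      (hγ.differentiable one_ne_zero x) (hω₀ x) (q x)).trans_eq ?_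
  rw [integral_add' (hweak_int.const_mul 2) hrhs_int, integral_const_mul, hweak, mul_zero, zero_add]

end Caccioppoli

section Liouville

variable {E : Type*} [NormedAddCommGroup E] [InnerProductSpace ℝ E] [FiniteDimensional ℝ E]

theorem exists_isTestFunction_eq_one_norm_gradient_le {K : Set E} (hK : IsCompact K) {δ : ℝ}
    (hδ : 0 < δ) : ∃ χ : E → ℝ, IsTestFunction χ ∧ (∀ x, |χ x| ≤ 1) ∧ (∀ x, ‖∇ χ x‖ ≤ δ) ∧
      ∀ x ∈ K, χ x = 1 := by
  let ψ : ContDiffBump (0 : E) := ⟨1, 2, one_pos, one_lt_two⟩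
  have hψ : ContDiff ℝ 1 ψ := ψ.contDiff
  obtain ⟨C, hC⟩ := (hψ.continuous_fderiv one_ne_zero).bounded_above_of_compact_support
    (ψ.hasCompactSupport.fderiv ℝ)
  obtain ⟨R, hR⟩ := hK.isBounded.exists_norm_le
  set s := max (max R (C / δ)) 1
  have hs : 0 < s := one_pos.trans_le (le_max_right _ _)
  have hgrad (x : E) : ‖∇ (fun x => ψ (s⁻¹ • x)) x‖ ≤ δ := by
    rw [gradient, LinearIsometryEquiv.norm_map, fderiv_comp_smul, norm_smul, norm_inv,
      norm_of_nonneg hs.le, inv_mul_le_iff₀ hs]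
    calc ‖fderiv ℝ ψ (s⁻¹ • x)‖ ≤ C := hC _
      _ = C / δ * δ := (div_mul_cancel₀ C hδ.ne').symm
      _ ≤ s * δ := by gcongr; exact (le_max_right _ _).trans (le_max_left _ _)
  refine ⟨fun x => ψ (s⁻¹ • x), ⟨ψ.contDiff.comp (contDiff_const_smul _), ?_⟩, fun x => ?_, hgrad,
    fun x hx => ?_⟩
  · exact ψ.hasCompactSupport.comp_homeomorph (Homeomorph.smulOfNeZero s⁻¹ (inv_ne_zero hs.ne'))
  · rw [abs_of_nonneg ψ.nonneg]
    exact ψ.le_one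
  · refine ψ.one_of_mem_closedBall ?_
    rw [mem_closedBall_zero_iff, norm_smul, norm_inv, norm_of_nonneg hs.le, inv_mul_le_iff₀ hs,
      mul_one]
    exact (hR x hx).trans ((le_max_left _ _).trans (le_max_left _ _))

theorem exists_forall_exp_neg_le_and_gradient_le {V : E → ℝ} (hV : ContDiff ℝ 1 V) {K : Set E}
    (hK : IsCompact K) {δ : ℝ} (hδ : 0 < δ) : ∃ r > 0, ∀ x ∈ K, ∀ y, ‖x - y‖ < r →
      exp (-V y) ≤ 2 * exp (-V x) ∧ ‖∇ V x - ∇ V y‖ ≤ δ := by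
  have hcont : Continuous fun x => (V x, ∇ V x) := hV.continuous.prodMk (continuous_gradient hV)
  have hlog : 0 < log 2 := log_pos one_lt_two
  obtain ⟨r, hr, hball⟩ := Metric.mem_uniformity_dist.1 <| hK.uniformContinuousAt_of_continuousAt
    _ (fun x _ => hcont.continuousAt) (Metric.dist_mem_uniformity (lt_min hlog hδ))
  refine ⟨r, hr, fun x hx y hxy => ?_⟩
  have hclose := hball (by rwa [dist_eq_norm]) hx
  simp only [mem_ofPred_eq, Prod.dist_eq, max_lt_iff, lt_min_iff] at hclose
  refine ⟨?_, (dist_eq_norm (∇ V x) _).symm.trans_le hclose.2.2.le⟩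
  have hVxy : V x - V y ≤ log 2 := (le_abs_self _).trans hclose.1.1.le
  calc exp (-V y) ≤ exp (log 2 + -V x) := exp_le_exp.2 (by linarith)
    _ = 2 * exp (-V x) := by rw [exp_add, exp_log two_pos]

end Liouville

section Liouville

variable {E : Type*} [NormedAddCommGroup E] [InnerProductSpace ℝ E] [FiniteDimensional ℝ E]
  [MeasurableSpace E] [BorelSpace E] {V w η χ θ : E → ℝ} {δ : ℝ}

theorem integrable_comp_const_sub_mul {f : E → ℝ} (hη : IsTestFunction η)
    (hf : LocallyIntegrable f) (x : E) : Integrable fun y => η (x - y) * f y :=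
  hf.integrable_smul_left_of_hasCompactSupport
    (hη.continuous.comp (continuous_const.sub continuous_id))
    (hη.hasCompactSupport.comp_homeomorph (Homeomorph.subLeft x))

theorem sq_integral_comp_const_sub_mul_abs_le (hη : IsMollifier η) (hV : Continuous V)
    (hw : LocallyIntegrable w) (hp : Integrable fun y => exp (V y) * w y ^ 2) {x : E} {C : ℝ}
    (hC : ∀ y, η (x - y) ≠ 0 → exp (-V y) ≤ C) :
    (∫ y, η (x - y) * |w y|) ^ 2 ≤ C * (η ⋆ fun y => exp (V y) * w y ^ 2) x := by
  have hexp : LocallyIntegrable fun y => exp (-V y) :=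
    Continuous.locallyIntegrable (by fun_prop)
  have hw_abs : LocallyIntegrable fun y => |w y| := fun y => (hw y).norm
  have hint {f : E → ℝ} (hf : LocallyIntegrable f) : Integrable fun y => η (x - y) * f y :=
    integrable_comp_const_sub_mul hη.toIsTestFunction hf x
  have hexp_le : ∫ y, η (x - y) * exp (-V y) ≤ C := by
    calc ∫ y, η (x - y) * exp (-V y) ≤ ∫ y, η (x - y) * C := by
          refine integral_mono (hint hexp) (hint continuous_const.locallyIntegrable) fun y => ?_
          by_cases hy : η (x - y) = 0
          · simp [hy]
          · exact mul_le_mul_of_nonneg_left (hC y hy) (hη.nonneg _)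
      _ = C := by
          rw [integral_mul_const, integral_sub_left_eq_self η volume x, hη.integral_eq_one, one_mul]
  rw [mul_comm C, convolution_lsmul_swap]
  refine (sq_integral_le_mul_of_sq_le (hint hp.locallyIntegrable) (hint hexp) (hint hw_abs)
    (fun y => mul_nonneg (hη.nonneg _) (by positivity))
    (fun y => mul_nonneg (hη.nonneg _) (exp_nonneg _))
    fun y => ?_).trans (mul_le_mul_of_nonneg_left hexp_le <|
      integral_nonneg fun y => mul_nonneg (hη.nonneg _) (by positivity))
  rw [mul_pow, sq_abs, exp_neg]
  exact le_of_eq (by field_simp)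

theorem norm_sq_integral_comp_const_sub_smul_le {F : Type*} [NormedAddCommGroup F]
    [NormedSpace ℝ F] (hη : IsMollifier η) (hV : Continuous V) (hw : LocallyIntegrable w)
    (hp : Integrable fun y => exp (V y) * w y ^ 2) {k : E → F} {c C : ℝ} {x : E}
    (hk : ∀ y, η (x - y) ≠ 0 → ‖k y‖ ≤ c) (hC : ∀ y, η (x - y) ≠ 0 → exp (-V y) ≤ C) :
    ‖∫ y, η (x - y) • w y • k y‖ ^ 2 ≤ c ^ 2 * (C * (η ⋆ fun y => exp (V y) * w y ^ 2) x) := by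
  have hw_abs : LocallyIntegrable fun y => |w y| := fun y => (hw y).norm
  have hnorm : ‖∫ y, η (x - y) • w y • k y‖ ≤ c * ∫ y, η (x - y) * |w y| := by
    rw [← integral_const_mul]
    refine norm_integral_le_of_norm_le
      ((integrable_comp_const_sub_mul hη.toIsTestFunction hw_abs x).const_mul c)
      (ae_of_all _ fun y => ?_)
    rw [norm_smul, norm_smul, norm_of_nonneg (hη.nonneg _), norm_eq_abs]
    by_cases hy : η (x - y) = 0
    · simp [hy]
    · linarith [mul_le_mul_of_nonneg_left (hk y hy)
        (mul_nonneg (hη.nonneg (x - y)) (abs_nonneg (w y)))]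
  calc ‖∫ y, η (x - y) • w y • k y‖ ^ 2 ≤ (c * ∫ y, η (x - y) * |w y|) ^ 2 := by gcongr
    _ ≤ _ := by
        rw [mul_pow]
        gcongr
        exact sq_integral_comp_const_sub_mul_abs_le hη hV hw hp hC

/-- The density of the mollified measure `(η ⋆ w) dx` relative to `e ^ -V dx`. -/
noncomputable def mollifiedRatio (η V w : E → ℝ) (x : E) : ℝ :=
  exp (V x) * (η ⋆ w) x

theorem contDiff_mollifiedRatio (hV : ContDiff ℝ 1 V) (hη : IsTestFunction η)
    (hw : LocallyIntegrable w) : ContDiff ℝ 1 (mollifiedRatio η V w) :=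
  hV.exp.mul (hη.hasCompactSupport.contDiff_convolution_left _ hη.contDiff_one hw)

/-- The commutator of mollification by `η` with multiplication by `∇ V`, applied to `w` and weighted
by `e ^ V`. It is the difference of the gradient of `mollifiedRatio η V w` and `e ^ V` times the
mollified flux `η ⋆ (∇ w + w • ∇ V)`. -/
noncomputable def driftCommutator (η V w : E → ℝ) (x : E) : E :=
  exp (V x) • ((η ⋆ w) x • ∇ V x - (η ⋆ fun y => w y • ∇ V y) x)

theorem continuous_driftCommutator (hη : IsTestFunction η)
    (hV : ContDiff ℝ 1 V) (hw : LocallyIntegrable w) : Continuous (driftCommutator η V w) := by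
  have hwV : LocallyIntegrable fun y => w y • ∇ V y := hw.smul_continuous (continuous_gradient hV)
  exact hV.continuous.rexp.smul
    (((hη.hasCompactSupport.continuous_convolution_left _ hη.continuous hw).smul
      (continuous_gradient hV)).sub
      (hη.hasCompactSupport.continuous_convolution_left _ hη.continuous hwV))

theorem driftCommutator_eq_integral (hη : IsTestFunction η)
    (hV : ContDiff ℝ 1 V) (hw : LocallyIntegrable w) (x : E) : driftCommutator η V w x =
      exp (V x) • ∫ y, η (x - y) • w y • (∇ V x - ∇ V y) := by
  have hwV : LocallyIntegrable fun y => w y • ∇ V y := hw.smul_continuous (continuous_gradient hV)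
  have hint : Integrable fun y => η (x - y) • w y • ∇ V y :=
    hwV.integrable_smul_left_of_hasCompactSupport
      (hη.continuous.comp (continuous_const.sub continuous_id))
      (hη.hasCompactSupport.comp_homeomorph (Homeomorph.subLeft x))
  have hint' : Integrable fun y => (η (x - y) * w y) • ∇ V x :=
    (integrable_comp_const_sub_mul hη hw x).smul_const _
  simp only [driftCommutator, convolution_lsmul_swap, smul_sub, smul_smul, smul_eq_mul] at hint ⊢
  rw [integral_sub hint' hint, integral_smul_const, smul_sub, smul_smul]

theorem exp_neg_smul_gradient_mollifiedRatio_sub (hV : ContDiff ℝ 1 V)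
    (hw : LocallyIntegrable w) (hη : IsTestFunction η) (x : E) :
    exp (-V x) • (∇ (mollifiedRatio η V w) x - driftCommutator η V w x) =
      ∇ (η ⋆ w) x + (η ⋆ fun z => w z • ∇ V z) x := by
  have hηw : ContDiff ℝ 1 (η ⋆ w) :=
    hη.hasCompactSupport.contDiff_convolution_left _ hη.contDiff_one hw
  have hgrad : ∇ (mollifiedRatio η V w) x =
      exp (V x) • (∇ (η ⋆ w) x + (η ⋆ w) x • ∇ V x) :=
    gradient_exp_mul (hV.differentiable one_ne_zero x) (hηw.differentiable one_ne_zero x)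
  rw [hgrad, driftCommutator, ← smul_sub, smul_smul, ← exp_add, neg_add_cancel, exp_zero, one_smul]
  abel

theorem integral_norm_gradient_mollifiedRatio_sq_le (hV : ContDiff ℝ 1 V)
    (hw : LocallyIntegrable w) (hstat : IsStationaryDensity V w) (hη : IsTestFunction η)
    (hχ : ContDiff ℝ 1 χ) (hsχ : HasCompactSupport χ) :
    ∫ x, exp (-V x) * (χ x ^ 2 * ‖∇ (mollifiedRatio η V w) x‖ ^ 2) ≤
      ∫ x, exp (-V x) * (4 * (mollifiedRatio η V w x ^ 2 * ‖∇ χ x‖ ^ 2) +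
        χ x ^ 2 * ‖driftCommutator η V w x‖ ^ 2) := by
  have hwV : LocallyIntegrable fun z => w z • ∇ V z := hw.smul_continuous (continuous_gradient hV)
  have hηw : ContDiff ℝ 2 (η ⋆ w) :=
    hη.hasCompactSupport.contDiff_convolution_left _ hη.contDiff_two hw
  have hηwV : ContDiff ℝ 1 (η ⋆ fun z => w z • ∇ V z) :=
    hη.hasCompactSupport.contDiff_convolution_left _ hη.contDiff_one hwV
  have hflux := funext (exp_neg_smul_gradient_mollifiedRatio_sub hV hw hη)
  refine integral_mul_sq_mul_norm_gradient_sq_le (by fun_prop) (fun x => exp_nonneg _) hχ hsχ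
    (contDiff_mollifiedRatio hV hη hw) (continuous_driftCommutator hη hV hw) ?_ ?_
  · rw [hflux]
    exact (contDiff_gradient hηw (by norm_num)).add hηwV
  · rw [hflux]
    exact divergence_flux_eq_zero hV hw hstat hη

theorem mollifiedRatio_sq_add_driftCommutator_sq_le (hV : ContDiff ℝ 1 V)
    (hw : LocallyIntegrable w) (hp : Integrable fun y => exp (V y) * w y ^ 2)
    (hη : IsMollifier η) {x : E} {a : ℝ} {z : E} (ha : |a| ≤ 1) (hz : ‖z‖ ≤ δ)
    (hlocV : ∀ y, η (x - y) ≠ 0 → exp (-V y) ≤ 2 * exp (-V x))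
    (hlocgrad : ∀ y, η (x - y) ≠ 0 → ‖∇ V x - ∇ V y‖ ≤ δ) :
    exp (-V x) * (4 * (mollifiedRatio η V w x ^ 2 * ‖z‖ ^ 2) +
      a ^ 2 * ‖driftCommutator η V w x‖ ^ 2) ≤
      10 * δ ^ 2 * (η ⋆ fun y => exp (V y) * w y ^ 2) x := by
  set p := (η ⋆ fun y => exp (V y) * w y ^ 2) x
  have hγ : (η ⋆ w) x ^ 2 ≤ 1 ^ 2 * (2 * exp (-V x) * p) := by
    simpa only [p, convolution_lsmul_swap, smul_eq_mul, mul_one, norm_eq_abs, sq_abs] using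
      norm_sq_integral_comp_const_sub_smul_le hη hV.continuous hw hp (k := fun _ => (1 : ℝ))
        (fun _ _ => norm_one.le) hlocV
  have hq : ‖driftCommutator η V w x‖ ^ 2 ≤
      exp (V x) ^ 2 * (δ ^ 2 * (2 * exp (-V x) * p)) := by
    rw [driftCommutator_eq_integral hη.toIsTestFunction hV hw, norm_smul, mul_pow,
      norm_of_nonneg (exp_nonneg _)]
    gcongr
    exact norm_sq_integral_comp_const_sub_smul_le hη hV.continuous hw hp hlocgrad hlocV
  have ha2 : a ^ 2 ≤ 1 := (sq_le_one_iff_abs_le_one a).2 ha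
  have hp₀ : 0 ≤ p := hη.convolution_nonneg (fun y => by positivity) x
  calc exp (-V x) * (4 * (mollifiedRatio η V w x ^ 2 * ‖z‖ ^ 2) +
        a ^ 2 * ‖driftCommutator η V w x‖ ^ 2)
      ≤ exp (-V x) * (4 * (exp (V x) ^ 2 * (1 ^ 2 * (2 * exp (-V x) * p)) * δ ^ 2) +
        1 * (exp (V x) ^ 2 * (δ ^ 2 * (2 * exp (-V x) * p)))) := by
        rw [mollifiedRatio, mul_pow]
        gcongr
    _ = 10 * δ ^ 2 * p := by
        rw [exp_neg]
        field_simp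
        ring

theorem integral_norm_gradient_mollifiedRatio_sq_le_mul_sq (hV : ContDiff ℝ 1 V)
    (hw : LocallyIntegrable w) (hp : Integrable fun y => exp (V y) * w y ^ 2)
    (hstat : IsStationaryDensity V w) (hη : IsMollifier η) (hχ : IsTestFunction χ)
    (hχ₁ : ∀ x, |χ x| ≤ 1) (hχδ : ∀ x, ‖∇ χ x‖ ≤ δ)
    (hlocV : ∀ x ∈ tsupport χ, ∀ y, η (x - y) ≠ 0 → exp (-V y) ≤ 2 * exp (-V x))
    (hlocgrad : ∀ x ∈ tsupport χ, ∀ y, η (x - y) ≠ 0 → ‖∇ V x - ∇ V y‖ ≤ δ) :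
    ∫ x, exp (-V x) * (χ x ^ 2 * ‖∇ (mollifiedRatio η V w) x‖ ^ 2) ≤
      10 * δ ^ 2 * ∫ x, exp (V x) * w x ^ 2 := by
  have hηint : Integrable η := hη.continuous.integrable_of_hasCompactSupport hη.hasCompactSupport
  have hηp : ∫ x, (η ⋆ fun y => exp (V y) * w y ^ 2) x = ∫ x, exp (V x) * w x ^ 2 := by
    rw [integral_convolution _ hηint hp, hη.integral_eq_one, ContinuousLinearMap.lsmul_apply,
      one_smul]
  refine (integral_norm_gradient_mollifiedRatio_sq_le hV hw hstat hη.toIsTestFunction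
    hχ.contDiff_one hχ.hasCompactSupport).trans ?_
  rw [← hηp, ← integral_const_mul]
  refine integral_mono_of_nonneg (ae_of_all _ fun x => by positivity)
    ((hηint.integrable_convolution _ hp).const_mul _) (ae_of_all _ fun x => ?_)
  by_cases hx : x ∈ tsupport χ
  · exact mollifiedRatio_sq_add_driftCommutator_sq_le hV hw hp hη (hχ₁ x) (hχδ x)
      (hlocV x hx) (hlocgrad x hx)
  · have hηp₀ : 0 ≤ (η ⋆ fun y => exp (V y) * w y ^ 2) x :=
      hη.convolution_nonneg (fun y => by positivity) x
    simp only [gradient_eq_zero_of_notMem_tsupport hx, image_eq_zero_of_notMem_tsupport hx]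
    simpa using by positivity

theorem sq_integral_mul_dirDeriv_le {γ : E → ℝ} (hV : Continuous V) (hγ : ContDiff ℝ 1 γ)
    (hθ : IsTestFunction θ) (hχ : IsTestFunction χ) (hχθ : ∀ x ∈ tsupport θ, χ x = 1) (v : E) :
    (∫ x, γ x * dirDeriv v θ x) ^ 2 ≤ (∫ x, exp (-V x) * (χ x ^ 2 * ‖∇ γ x‖ ^ 2)) *
      ∫ x, exp (V x) * (‖v‖ ^ 2 * θ x ^ 2) := by
  have hcγ := continuous_gradient hγ
  have hcχ := hχ.continuous
  have hcθ := hθ.continuous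
  have hsθ := hθ.hasCompactSupport
  have hparts : ∫ x, γ x * dirDeriv v θ x = -∫ x, dirDeriv v γ x * θ x :=
    integral_mul_fderiv_eq_neg_fderiv_mul_of_integrable
      (((continuous_dirDeriv hγ v).mul hcθ).integrable_of_hasCompactSupport hsθ.mul_left)
      ((hγ.continuous.mul (hθ.dirDeriv v).continuous).integrable_of_hasCompactSupport
        (hθ.dirDeriv v).hasCompactSupport.mul_left)
      ((hγ.continuous.mul hcθ).integrable_of_hasCompactSupport hsθ.mul_left)
      (fun x _ => hγ.differentiable one_ne_zero x)
      (fun x _ => hθ.contDiff_one.differentiable one_ne_zero x)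
  rw [hparts, neg_sq]
  refine sq_integral_le_mul_of_sq_le
    (Continuous.integrable_of_hasCompactSupport (by fun_prop)
      (hχ.hasCompactSupport.mono fun x hx h => hx (by simp [h])))
    (Continuous.integrable_of_hasCompactSupport (by fun_prop)
      (hsθ.mono fun x hx h => hx (by simp [h])))
    (((continuous_dirDeriv hγ v).mul hcθ).integrable_of_hasCompactSupport hsθ.mul_left)
    (fun x => by positivity) (fun x => by positivity) fun x => ?_
  by_cases hx : x ∈ tsupport θ
  · have hdir : dirDeriv v γ x ^ 2 ≤ (‖v‖ * ‖∇ γ x‖) ^ 2 := by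
      rw [← inner_gradient_eq_dirDeriv, ← sq_abs]
      gcongr
      exact abs_real_inner_le_norm _ _
    calc (dirDeriv v γ x * θ x) ^ 2 ≤ (‖v‖ * ‖∇ γ x‖) ^ 2 * θ x ^ 2 := by rw [mul_pow]; gcongr
      _ = _ := by
        rw [hχθ x hx, exp_neg]
        field_simp
  · simp [image_eq_zero_of_notMem_tsupport hx]

theorem sq_integral_exp_mul_dirDeriv_le (hV : ContDiff ℝ 1 V)
    (hw : LocallyIntegrable w) (hp : Integrable fun y => exp (V y) * w y ^ 2)
    (hstat : IsStationaryDensity V w) (hθ : IsTestFunction θ) (v : E) (hδ : 0 < δ) :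
    (∫ x, exp (V x) * w x * dirDeriv v θ x) ^ 2 ≤
      10 * δ ^ 2 * (∫ x, exp (V x) * w x ^ 2) * ∫ x, exp (V x) * (‖v‖ ^ 2 * θ x ^ 2) := by
  obtain ⟨χ, hχ, hχ₁, hχδ, hχθ⟩ :=
    exists_isTestFunction_eq_one_norm_gradient_le hθ.hasCompactSupport hδ
  obtain ⟨r, hr, hloc⟩ := exists_forall_exp_neg_le_and_gradient_le hV hχ.hasCompactSupport hδ
  have hlim := tendsto_integral_convolution_mul (tendsto_rOut_shrinkingBump (E := E)) hw
    (hθ.dirDeriv v).hasCompactSupport.mul_left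
    (hV.continuous.rexp.mul (hθ.dirDeriv v).continuous)
  have hcomm : ∫ x, exp (V x) * w x * dirDeriv v θ x =
      ∫ x, w x * (exp (V x) * dirDeriv v θ x) := by
    simp only [mul_left_comm, mul_assoc]
  rw [hcomm]
  refine le_of_tendsto (hlim.pow 2) ?_
  filter_upwards [(tendsto_rOut_shrinkingBump (E := E)).eventually_lt_const hr] with k hk
  set ψ : ContDiffBump (0 : E) := shrinkingBump k
  set η : E → ℝ := ψ.normed volume
  have hη : IsMollifier η := isMollifier_normed ψ
  have hsmall {x y : E} (hxy : η (x - y) ≠ 0) : ‖x - y‖ < r := by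
    have hmem : x - y ∈ Metric.ball (0 : E) ψ.rOut := by
      rw [← ψ.support_normed_eq (μ := volume)]
      exact hxy
    exact (mem_ball_zero_iff.1 hmem).trans hk
  calc (∫ x, (η ⋆ w) x * (exp (V x) * dirDeriv v θ x)) ^ 2
      = (∫ x, mollifiedRatio η V w x * dirDeriv v θ x) ^ 2 := by
        simp only [mollifiedRatio, mul_left_comm, mul_assoc]
    _ ≤ _ := sq_integral_mul_dirDeriv_le hV.continuous
        (contDiff_mollifiedRatio hV hη.toIsTestFunction hw) hθ hχ hχθ v
    _ ≤ _ := by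
        gcongr
        exact integral_norm_gradient_mollifiedRatio_sq_le_mul_sq hV hw hp hstat hη hχ hχ₁ hχδ
          (fun x hx y hy => (hloc x hx y (hsmall hy)).1)
          fun x hx y hy => (hloc x hx y (hsmall hy)).2

theorem exists_exp_mul_ae_eq_const (hV : ContDiff ℝ 1 V) (hw : LocallyIntegrable w)
    (hp : Integrable fun y => exp (V y) * w y ^ 2) (hstat : IsStationaryDensity V w) :
    ∃ c, (fun x => exp (V x) * w x) =ᵐ[volume] fun _ => c := by
  have hexpw : LocallyIntegrable fun x => exp (V x) * w x := by
    simpa only [smul_eq_mul, mul_comm] using hw.smul_continuous hV.continuous.rexp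
  refine ae_eq_const_of_integral_mul_dirDeriv_eq_zero hexpw fun θ hθ v => ?_
  set I := ∫ x, exp (V x) * w x * dirDeriv v θ x
  set C := (∫ x, exp (V x) * w x ^ 2) * ∫ x, exp (V x) * (‖v‖ ^ 2 * θ x ^ 2)
  have hbound : ∀ δ > 0, I ^ 2 ≤ 10 * δ ^ 2 * C := fun δ hδ =>
    (sq_integral_exp_mul_dirDeriv_le hV hw hp hstat hθ v hδ).trans_eq (mul_assoc _ _ _)
  have hlim : Tendsto (fun δ : ℝ => 10 * δ ^ 2 * C) (𝓝[>] 0) (𝓝 0) := by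
    have : Continuous fun δ : ℝ => 10 * δ ^ 2 * C := by fun_prop
    simpa using (this.tendsto 0).mono_left nhdsWithin_le_nhds
  exact pow_eq_zero_iff two_ne_zero |>.1 <|
    le_antisymm (ge_of_tendsto hlim (eventually_mem_nhdsWithin.mono hbound)) (sq_nonneg I)

end Liouville

section Density

variable {E : Type*} [NormedAddCommGroup E] [InnerProductSpace ℝ E] [FiniteDimensional ℝ E]
  [MeasurableSpace E] [BorelSpace E] {V : E → ℝ}

theorem ae_eq_const_of_integral_mul_generator_eq_zero {g : E → ℝ} (hV : ContDiff ℝ 1 V)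
    (hVint : Integrable fun x => exp (-V x)) (hg : MemLp g 2 (gibbsMeasure V))
    (hperp : ∀ u, IsTestFunction u → ∫ x, g x * generator V u x ∂gibbsMeasure V = 0) :
    ∃ c, g =ᵐ[gibbsMeasure V] fun _ => c := by
  have hZ : 0 < ∫ x, exp (-V x) := integral_exp_pos hVint
  have hint {f : E → ℝ} (hf : Integrable f (gibbsMeasure V)) :
      Integrable fun x => exp (-V x) * f x := (integrable_tilted_iff hVint f).1 hf
  have hp : Integrable fun x => exp (V x) * (exp (-V x) * g x) ^ 2 := by
    refine (hint hg.integrable_sq).congr (ae_of_all _ fun x => ?_)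
    simp only [exp_neg]
    field_simp
  have hstat : IsStationaryDensity V fun x => exp (-V x) * g x := fun u hu => by
    simpa only [integral_gibbsMeasure, mul_eq_zero, inv_eq_zero, hZ.ne', false_or, mul_assoc]
      using hperp u hu
  obtain ⟨c, hc⟩ := exists_exp_mul_ae_eq_const hV
    (hint (hg.integrable one_le_two)).locallyIntegrable hp hstat
  refine ⟨c, (tilted_absolutelyContinuous _ _).ae_le (hc.mono fun x hx => ?_)⟩
  simpa only [← mul_assoc, ← exp_add, add_neg_cancel, exp_zero, one_mul] using hx

/-- The subspace `{L u | u a test function}` of `L²(e ^ -V)`, where `L` is the generator. -/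
def generatorRange (V : E → ℝ) : Submodule ℝ (Lp ℝ 2 (gibbsMeasure V)) where
  carrier := {v | ∃ u, IsTestFunction u ∧ v =ᵐ[gibbsMeasure V] generator V u}
  zero_mem' := by
    refine ⟨0, ⟨contDiff_const, HasCompactSupport.zero⟩, ?_⟩
    filter_upwards [Lp.coeFn_zero ℝ 2 (gibbsMeasure V)] with x hx
    rw [hx, generator_eq_zero_of_notMem_tsupport (by simp [tsupport]), Pi.zero_apply]
  add_mem' := by
    rintro a b ⟨u, hu, hua⟩ ⟨v, hv, hvb⟩
    refine ⟨u + v, hu.add hv, (Lp.coeFn_add a b).trans ?_⟩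
    rw [generator_add hu.contDiff_two hv.contDiff_two]
    exact hua.add hvb
  smul_mem' := by
    rintro c a ⟨u, hu, hua⟩
    refine ⟨c • u, hu.const_smul c, (Lp.coeFn_smul c a).trans ?_⟩
    rw [generator_const_smul c hu.contDiff_two]
    exact hua.const_smul c

theorem memLp_generator {u : E → ℝ} (hV : ContDiff ℝ 1 V) (hu : IsTestFunction u) :
    MemLp (generator V u) 2 (gibbsMeasure V) :=
  (continuous_generator hV hu.contDiff_two).memLp_of_hasCompactSupport
    (hasCompactSupport_generator hu.hasCompactSupport)

theorem inner_Lp_eq_zero_of_mem_orthogonal_generatorRange {g F : Lp ℝ 2 (gibbsMeasure V)}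
    (hV : ContDiff ℝ 1 V) (hVint : Integrable fun x => exp (-V x))
    (hF₀ : ∫ x, F x ∂gibbsMeasure V = 0) (hg : g ∈ (generatorRange V)ᗮ) : ⟪g, F⟫ = 0 := by
  obtain ⟨c, hc⟩ := ae_eq_const_of_integral_mul_generator_eq_zero hV hVint (Lp.memLp g)
    fun u hu => by
      have hmem := memLp_generator hV hu
      rw [← (Submodule.mem_orthogonal _ _).1 hg (hmem.toLp _) ⟨u, hu, hmem.coeFn_toLp⟩,
        L2.inner_def]
      refine integral_congr_ae ?_
      filter_upwards [hmem.coeFn_toLp] with x hx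
      simp [hx]
  rw [L2.inner_def, ← mul_zero c, ← hF₀, ← integral_const_mul]
  refine integral_congr_ae ?_
  filter_upwards [hc] with x hx
  simp [hx, mul_comm]

theorem exists_integral_sub_generator_sq_le {F : E → ℝ} (hV : ContDiff ℝ 1 V)
    (hVint : Integrable fun x => exp (-V x)) (hF : MemLp F 2 (gibbsMeasure V))
    (hF₀ : ∫ x, F x ∂gibbsMeasure V = 0) {ε : ℝ} (hε : 0 < ε) :
    ∃ u, IsTestFunction u ∧ ∫ x, (F x - generator V u x) ^ 2 ∂gibbsMeasure V ≤ ε := by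
  have hmem : hF.toLp F ∈ (generatorRange V).topologicalClosure := by
    rw [← Submodule.orthogonal_orthogonal_eq_closure, Submodule.mem_orthogonal]
    refine fun g hg => inner_Lp_eq_zero_of_mem_orthogonal_generatorRange hV hVint ?_ hg
    rw [integral_congr_ae hF.coeFn_toLp, hF₀]
  obtain ⟨s, ⟨u, hu, hus⟩, hs⟩ := Metric.mem_closure_iff.1 hmem (√ε) (sqrt_pos.2 hε)
  refine ⟨u, hu, ?_⟩
  calc ∫ x, (F x - generator V u x) ^ 2 ∂gibbsMeasure V = ‖hF.toLp F - s‖ ^ 2 := by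
        rw [← real_inner_self_eq_norm_sq, L2.inner_def]
        refine integral_congr_ae ?_
        filter_upwards [Lp.coeFn_sub (hF.toLp F) s, hus, hF.coeFn_toLp] with x hsub hux hFx
        rw [hsub, Pi.sub_apply, hux, hFx, real_inner_self_eq_norm_sq, norm_eq_abs, sq_abs]
    _ ≤ √ε ^ 2 := by
        rw [← dist_eq_norm]
        gcongr
    _ = ε := sq_sqrt hε.le

end Density

section Poincare

section TestFunction

variable {E : Type*} [NormedAddCommGroup E] [NormedSpace ℝ E] [MeasurableSpace E] [BorelSpace E]
  {μ : Measure E} {u ρ : E → ℝ}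

theorem IsTestFunction.memLp_two [IsFiniteMeasureOnCompacts μ]
    (hu : IsTestFunction u) : MemLp u 2 μ :=
  hu.continuous.memLp_of_hasCompactSupport hu.hasCompactSupport

theorem IsTestFunction.integrable_mul_sq (hu : IsTestFunction u)
    (hρ : LocallyIntegrable ρ μ) : Integrable (fun x => ρ x * u x ^ 2) μ := by
  have hs : HasCompactSupport fun x => u x ^ 2 :=
    hu.hasCompactSupport.mono fun x hx h => hx (by simp [h])
  simpa only [smul_eq_mul, mul_comm] using
    hρ.integrable_smul_left_of_hasCompactSupport (g := fun x => u x ^ 2) (hu.continuous.pow 2) hs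

end TestFunction

section Young

variable {E : Type*} [NormedAddCommGroup E] [InnerProductSpace ℝ E] {Λ : ℝ}

theorem neg_two_mul_inner_le (hΛ : 0 < Λ) (a b : E) :
    -(2 * ⟪a, b⟫) ≤ 1 / Λ * ‖a‖ ^ 2 + Λ * ‖b‖ ^ 2 := by
  have hsq : 0 ≤ 1 / Λ * ‖a + Λ • b‖ ^ 2 := by positivity
  rw [norm_add_sq_real, inner_smul_right, norm_smul, mul_pow, norm_eq_abs, sq_abs] at hsq
  field_simp at hsq ⊢
  linarith

theorem neg_two_mul_integral_inner_le {Ω : Type*} [MeasurableSpace Ω] {μ : Measure Ω}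
    {P Q : Ω → E} (hΛ : 0 < Λ) (hPQ : Integrable (fun x => ⟪P x, Q x⟫) μ)
    (hP : Integrable (fun x => ‖P x‖ ^ 2) μ) (hQ : Integrable (fun x => ‖Q x‖ ^ 2) μ) :
    -(2 * ∫ x, ⟪P x, Q x⟫ ∂μ) ≤ 1 / Λ * ∫ x, ‖P x‖ ^ 2 ∂μ + Λ * ∫ x, ‖Q x‖ ^ 2 ∂μ := by
  simp only [← integral_const_mul, ← integral_neg]
  rw [← integral_add (hP.const_mul _) (hQ.const_mul _)]
  exact integral_mono (hPQ.const_mul 2).neg ((hP.const_mul _).add (hQ.const_mul _))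
    fun x => neg_two_mul_inner_le hΛ _ _

theorem integral_sub_sq {Ω : Type*} [MeasurableSpace Ω] {μ : Measure Ω} {f g : Ω → ℝ}
    (hf : MemLp f 2 μ) (hg : MemLp g 2 μ) :
    ∫ x, (f x - g x) ^ 2 ∂μ =
      ∫ x, f x ^ 2 ∂μ - 2 * ∫ x, f x * g x ∂μ + ∫ x, g x ^ 2 ∂μ := by
  have hf₂ : Integrable (fun x => f x ^ 2) μ := hf.integrable_sq
  have hfg : Integrable (fun x => 2 * (f x * g x)) μ := (hf.integrable_mul hg).const_mul 2
  have hsub : Integrable (fun x => f x ^ 2 - 2 * (f x * g x)) μ := hf₂.sub hfg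
  simp only [sub_sq, mul_assoc]
  rw [integral_add hsub hg.integrable_sq, integral_sub hf₂ hfg, integral_const_mul]

end Young

variable {E : Type*} [NormedAddCommGroup E] [InnerProductSpace ℝ E] [FiniteDimensional ℝ E]
  [MeasurableSpace E]

/-- The Poincaré inequality with constant `C` for the measure `μ`. -/
def PoincareInequality (μ : Measure E) (C : ℝ) : Prop :=
  ∀ f, IsTestFunction f → Var[f; μ] ≤ C * ∫ x, ‖∇ f x‖ ^ 2 ∂μ

theorem PoincareInequality.mono {μ : Measure E} {C C' : ℝ} (hP : PoincareInequality μ C)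
    (hC : C ≤ C') : PoincareInequality μ C' := fun f hf =>
  (hP f hf).trans <| mul_le_mul_of_nonneg_right hC <| integral_nonneg fun _ => sq_nonneg _

/-- The quadratic form `h ↦ ∫ ‖∇ h‖² + ρ h² ∂μ` of the Schrödinger operator `-L + ρ` is bounded
below by `Λ`, where `L` is the diffusion generator associated with `μ`. -/
def SchrodingerGap (ρ : E → ℝ) (μ : Measure E) (Λ : ℝ) : Prop :=
  ∀ h, IsTestFunction h → Λ * ∫ x, h x ^ 2 ∂μ ≤ ∫ x, ‖∇ h x‖ ^ 2 ∂μ + ∫ x, ρ x * h x ^ 2 ∂μ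

variable [BorelSpace E] {V ρ u F : E → ℝ} {Λ : ℝ}

theorem IsTestFunction.integrable_norm_gradient_sq {μ : Measure E} [IsFiniteMeasureOnCompacts μ]
    (hu : IsTestFunction u) : Integrable (fun x => ‖∇ u x‖ ^ 2) μ :=
  ((continuous_gradient hu.contDiff_one).norm.pow 2).integrable_of_hasCompactSupport
    ((hasCompactSupport_gradient hu.hasCompactSupport).mono fun x hx h => hx (by simp [h]))

theorem SchrodingerGap.mul_integral_norm_gradient_sq_le (hgap : SchrodingerGap ρ (gibbsMeasure V) Λ)
    (hV : ContDiff ℝ 2 V) (hρ : LocallyIntegrable ρ (gibbsMeasure V))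
    (hHess : ∀ x v, ρ x * ‖v‖ ^ 2 ≤ fderiv ℝ (fderiv ℝ V) x v v) (hu : IsTestFunction u) :
    Λ * ∫ x, ‖∇ u x‖ ^ 2 ∂gibbsMeasure V ≤ ∫ x, generator V u x ^ 2 ∂gibbsMeasure V := by
  set b := stdOrthonormalBasis ℝ E
  have hdir (i) : IsTestFunction (dirDeriv (b i) u) := hu.dirDeriv (b i)
  have hsq (i) : Integrable (fun x => dirDeriv (b i) u x ^ 2) (gibbsMeasure V) :=
    (hdir i).memLp_two.integrable_sq
  have hρsq (i) := (hdir i).integrable_mul_sq hρ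
  have hρgrad : ∑ i, ∫ x, ρ x * dirDeriv (b i) u x ^ 2 ∂gibbsMeasure V ≤
      ∫ x, fderiv ℝ (fderiv ℝ V) x (∇ u x) (∇ u x) ∂gibbsMeasure V := by
    rw [← integral_finsetSum _ fun i _ => hρsq i]
    refine integral_mono (integrable_finsetSum _ fun i _ => hρsq i)
      (integrable_fderiv_fderiv_gradient hV hu) fun x => ?_
    rw [← Finset.mul_sum, ← norm_gradient_sq]
    exact hHess x _
  simp only [norm_gradient_sq b u]
  rw [integral_finsetSum _ fun i _ => hsq i, Finset.mul_sum, integral_generator_sq b hV hu]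
  calc ∑ i, Λ * ∫ x, dirDeriv (b i) u x ^ 2 ∂gibbsMeasure V
      ≤ ∑ i, (∫ x, ‖∇ (dirDeriv (b i) u) x‖ ^ 2 ∂gibbsMeasure V +
          ∫ x, ρ x * dirDeriv (b i) u x ^ 2 ∂gibbsMeasure V) :=
        Finset.sum_le_sum fun i _ => hgap _ (hdir i)
    _ ≤ _ := by
        rw [Finset.sum_add_distrib]
        gcongr

theorem integral_sq_le_integral_sub_generator_sq_add (hΛ : 0 < Λ) (hV : ContDiff ℝ 1 V)
    (hu : IsTestFunction u)
    (hspec : Λ * ∫ x, ‖∇ u x‖ ^ 2 ∂gibbsMeasure V ≤ ∫ x, generator V u x ^ 2 ∂gibbsMeasure V)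
    (hF : ContDiff ℝ 1 F) (hF₂ : MemLp F 2 (gibbsMeasure V))
    (hgrad : Integrable (fun x => ‖∇ F x‖ ^ 2) (gibbsMeasure V)) :
    ∫ x, F x ^ 2 ∂gibbsMeasure V ≤ ∫ x, (F x - generator V u x) ^ 2 ∂gibbsMeasure V +
      1 / Λ * ∫ x, ‖∇ F x‖ ^ 2 ∂gibbsMeasure V := by
  have hcross : Integrable (fun x => ⟪∇ F x, ∇ u x⟫) (gibbsMeasure V) :=
    ((continuous_gradient hF).inner (continuous_gradient hu.contDiff_one))
      |>.integrable_of_hasCompactSupport <|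
        (hasCompactSupport_gradient hu.hasCompactSupport).mono fun x hx h => hx (by simp [h])
  have hexpand := integral_sub_sq hF₂ (memLp_generator hV hu)
  have hyoung := neg_two_mul_integral_inner_le hΛ hcross hgrad hu.integrable_norm_gradient_sq
  have hibp := integral_mul_generator hV hu.contDiff_two hu.hasCompactSupport hF
  linarith

theorem poincareInequality_of_mul_integral_norm_gradient_sq_le (hΛ : 0 < Λ)
    (hV : ContDiff ℝ 1 V) (hVint : Integrable fun x => exp (-V x))
    (hspec : ∀ u, IsTestFunction u →
      Λ * ∫ x, ‖∇ u x‖ ^ 2 ∂gibbsMeasure V ≤ ∫ x, generator V u x ^ 2 ∂gibbsMeasure V) :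
    PoincareInequality (gibbsMeasure V) (1 / Λ) := fun f hf => by
  have : IsProbabilityMeasure (gibbsMeasure V) := isProbabilityMeasure_tilted hVint
  have hf₂ : MemLp f 2 (gibbsMeasure V) := hf.memLp_two
  set c := ∫ x, f x ∂gibbsMeasure V with hc
  have hF₂ : MemLp (fun x => f x - c) 2 (gibbsMeasure V) := hf₂.sub (memLp_const c)
  have hF₀ : ∫ x, (f x - c) ∂gibbsMeasure V = 0 := by
    rw [integral_sub (hf₂.integrable one_le_two) (integrable_const c), integral_const]
    simp [hc]
  have hgradF (x : E) : ∇ (fun y => f y - c) x = ∇ f x := by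
    rw [gradient, fderiv_sub_const, gradient]
  rw [ProbabilityTheory.variance_eq_integral hf.continuous.aemeasurable]
  refine le_of_forall_pos_le_add fun ε hε => ?_
  obtain ⟨u, hu, hdist⟩ :=
    exists_integral_sub_generator_sq_le hV hVint hF₂ hF₀ hε
  have hmain := integral_sq_le_integral_sub_generator_sq_add hΛ hV hu (hspec u hu)
    (hf.contDiff_one.sub contDiff_const) hF₂
    (by simpa only [hgradF] using hf.integrable_norm_gradient_sq)
  simp only [hgradF] at hmain
  linarith

end Poincare

section WeightedVariance

variable {Ω : Type*} [MeasurableSpace Ω] {μ : Measure Ω} [IsProbabilityMeasure μ] {w h : Ω → ℝ}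
  {r δ : ℝ}

theorem div_mul_sq_le_sq_add {p : ℝ} (hr : 0 < r) (hp : 0 < p) (s c : ℝ) :
    r / (r + p) * c ^ 2 ≤ s ^ 2 + r / p * (s - c) ^ 2 := by
  have hsq : 0 ≤ (s * (r + p) - r * c) ^ 2 / (p * (r + p)) := by positivity
  have hid : s ^ 2 + r / p * (s - c) ^ 2 - r / (r + p) * c ^ 2 =
      (s * (r + p) - r * c) ^ 2 / (p * (r + p)) := by
    field_simp
    ring
  linarith

theorem div_mul_mean_sq_le_integral_mul_sq_add {p : ℝ} (hr : 0 < r) (hp : 0 < p)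
    (hw : AEStronglyMeasurable w μ) (hw₀ : ∀ x, 0 ≤ w x) (hwδ : ∀ x, w x ≤ δ)
    (hh : MemLp h 2 μ) :
    r / (r + p) * (∫ x, h x ∂μ) ^ 2 * ∫ x, w x ∂μ ≤
      ∫ x, w x * h x ^ 2 ∂μ + δ * (r / p) * Var[h; μ] := by
  set c := ∫ x, h x ∂μ
  have hwnorm : ∀ᵐ x ∂μ, ‖w x‖ ≤ δ :=
    ae_of_all _ fun x => (abs_of_nonneg (hw₀ x)).trans_le (hwδ x)
  have hwint : Integrable w μ := .of_bound hw δ hwnorm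
  have hwsq : Integrable (fun x => w x * h x ^ 2) μ := hh.integrable_sq.bdd_mul hw hwnorm
  have hdev : Integrable (fun x => (h x - c) ^ 2) μ := (hh.sub (memLp_const c)).integrable_sq
  rw [ProbabilityTheory.variance_eq_integral hh.aemeasurable, ← integral_const_mul,
    ← integral_const_mul, ← integral_add hwsq (hdev.const_mul _)]
  refine integral_mono (hwint.const_mul _) (hwsq.add (hdev.const_mul _)) fun x => ?_
  calc r / (r + p) * c ^ 2 * w x ≤ (h x ^ 2 + r / p * (h x - c) ^ 2) * w x := by
        gcongr
        exacts [hw₀ x, div_mul_sq_le_sq_add hr hp _ _]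
    _ = w x * h x ^ 2 + w x * (r / p) * (h x - c) ^ 2 := by ring
    _ ≤ w x * h x ^ 2 + δ * (r / p) * (h x - c) ^ 2 := by
        gcongr
        exact hwδ x

theorem mul_integral_sq_le_mul_variance_add (hr : 0 < r) (hδ : 0 < δ)
    (hw : AEStronglyMeasurable w μ) (hw₀ : ∀ x, 0 ≤ w x) (hwδ : ∀ x, w x ≤ δ)
    (hh : MemLp h 2 μ) :
    r * (∫ x, w x ∂μ) / (r + ∫ x, w x ∂μ + δ) * ∫ x, h x ^ 2 ∂μ ≤
      r * Var[h; μ] + ∫ x, w x * h x ^ 2 ∂μ := by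
  set a := ∫ x, w x ∂μ
  have ha : 0 ≤ a := integral_nonneg hw₀
  have hmean : r / (r + (a + δ)) * (∫ x, h x ∂μ) ^ 2 * a ≤
      ∫ x, w x * h x ^ 2 ∂μ + δ * (r / (a + δ)) * Var[h; μ] :=
    div_mul_mean_sq_le_integral_mul_sq_add hr (by positivity) hw hw₀ hwδ hh
  have hvar : r * a / (r + a + δ) * Var[h; μ] ≤ r * a / (a + δ) * Var[h; μ] := by
    gcongr
    exacts [ProbabilityTheory.variance_nonneg h μ, by linarith]
  have hsq : ∫ x, h x ^ 2 ∂μ = Var[h; μ] + (∫ x, h x ∂μ) ^ 2 := by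
    rw [ProbabilityTheory.variance_eq_sub hh]
    simp
  calc r * a / (r + a + δ) * ∫ x, h x ^ 2 ∂μ
      = r * a / (r + a + δ) * Var[h; μ] + r / (r + (a + δ)) * (∫ x, h x ∂μ) ^ 2 * a := by
        rw [hsq]
        ring
    _ ≤ r * a / (a + δ) * Var[h; μ] +
          (∫ x, w x * h x ^ 2 ∂μ + δ * (r / (a + δ)) * Var[h; μ]) := by gcongr
    _ = r * Var[h; μ] + ∫ x, w x * h x ^ 2 ∂μ := by
        field_simp
        ring

end WeightedVariance

section BakryEmery

variable {E : Type*} [NormedAddCommGroup E] [InnerProductSpace ℝ E] [FiniteDimensional ℝ E]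
  [MeasurableSpace E] [BorelSpace E] {V ρ : E → ℝ}

theorem SchrodingerGap.poincareInequality {Λ : ℝ} (hgap : SchrodingerGap ρ (gibbsMeasure V) Λ)
    (hΛ : 0 < Λ) (hV : ContDiff ℝ 2 V) (hVint : Integrable fun x => exp (-V x))
    (hρ : LocallyIntegrable ρ (gibbsMeasure V))
    (hHess : ∀ x v, ρ x * ‖v‖ ^ 2 ≤ fderiv ℝ (fderiv ℝ V) x v v) :
    PoincareInequality (gibbsMeasure V) (1 / Λ) :=
  poincareInequality_of_mul_integral_norm_gradient_sq_le hΛ (hV.of_le (by norm_num)) hVint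
    fun _ hu => hgap.mul_integral_norm_gradient_sq_le hV hρ hHess hu

theorem poincareInequality_of_le_hessian {r : ℝ} (hr : 0 < r) (hV : ContDiff ℝ 2 V)
    (hVint : Integrable fun x => exp (-V x))
    (hHess : ∀ x v, r * ‖v‖ ^ 2 ≤ fderiv ℝ (fderiv ℝ V) x v v) :
    PoincareInequality (gibbsMeasure V) (1 / r) := by
  have hgap : SchrodingerGap (fun _ => r) (gibbsMeasure V) r := fun h _ => by
    rw [integral_const_mul]
    exact le_add_of_nonneg_left (integral_nonneg fun x => sq_nonneg _)
  exact hgap.poincareInequality hr hV hVint (locallyIntegrable_const r) hHess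

theorem PoincareInequality.schrodingerGap {μ : Measure E} [IsProbabilityMeasure μ] {r δ : ℝ}
    (hP : PoincareInequality μ (1 / r)) (hr : 0 < r) (hδ : 0 < δ)
    (hρ : AEStronglyMeasurable ρ μ) (hrρ : ∀ x, r ≤ ρ x) (hρδ : ∀ x, ρ x ≤ r + δ) :
    SchrodingerGap ρ μ (r + r * (∫ x, ρ x ∂μ - r) / (∫ x, ρ x ∂μ + δ)) := fun h hh => by
  have hρnorm : ∀ᵐ x ∂μ, ‖ρ x‖ ≤ r + δ :=
    ae_of_all _ fun x => (abs_of_nonneg (hr.le.trans (hrρ x))).trans_le (hρδ x)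
  have hρint : Integrable ρ μ := .of_bound hρ (r + δ) hρnorm
  have hhsq : Integrable (fun x => h x ^ 2) μ := hh.memLp_two.integrable_sq
  have hvar : r * Var[h; μ] ≤ ∫ x, ‖∇ h x‖ ^ 2 ∂μ := by
    have hpoincare := hP h hh
    rwa [one_div_mul_eq_div, le_div_iff₀' hr] at hpoincare
  have hweighted := mul_integral_sq_le_mul_variance_add hr hδ
    (hρ.sub aestronglyMeasurable_const) (fun x => sub_nonneg.2 (hrρ x))
    (fun x => sub_le_iff_le_add'.2 (hρδ x)) hh.memLp_two (μ := μ)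
  have hmean : ∫ x, (ρ x - r) ∂μ = ∫ x, ρ x ∂μ - r := by
    rw [integral_sub hρint (integrable_const r)]
    simp
  have hpot : ∫ x, (ρ x - r) * h x ^ 2 ∂μ = ∫ x, ρ x * h x ^ 2 ∂μ - r * ∫ x, h x ^ 2 ∂μ := by
    simp only [sub_mul]
    rw [integral_sub (hhsq.bdd_mul hρ hρnorm) (hhsq.const_mul r), integral_const_mul]
  simp only [Pi.sub_apply, hmean, hpot, add_sub_cancel] at hweighted
  linarith

theorem poincareInequality_of_variable_curvature {r δ : ℝ} (hr : 0 < r) (hδ : 0 < δ)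
    (hV : ContDiff ℝ 2 V) (hVint : Integrable fun x => exp (-V x))
    (hρ : AEStronglyMeasurable ρ (gibbsMeasure V))
    (hHess : ∀ x v, ρ x * ‖v‖ ^ 2 ≤ fderiv ℝ (fderiv ℝ V) x v v)
    (hrρ : ∀ x, r ≤ ρ x) (hρδ : ∀ x, ρ x ≤ r + δ) :
    PoincareInequality (gibbsMeasure V)
      (1 / (r + r * (∫ x, ρ x ∂gibbsMeasure V - r) / (∫ x, ρ x ∂gibbsMeasure V + δ))) := by
  have : IsProbabilityMeasure (gibbsMeasure V) := isProbabilityMeasure_tilted hVint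
  have hρint : Integrable ρ (gibbsMeasure V) := .of_bound hρ (r + δ) <|
    ae_of_all _ fun x => (abs_of_nonneg (hr.le.trans (hrρ x))).trans_le (hρδ x)
  have hmean : r ≤ ∫ x, ρ x ∂gibbsMeasure V := by
    simpa using integral_mono (integrable_const r) hρint hrρ
  have hΛ : 0 < r + r * (∫ x, ρ x ∂gibbsMeasure V - r) / (∫ x, ρ x ∂gibbsMeasure V + δ) :=
    add_pos_of_pos_of_nonneg hr <|
      div_nonneg (mul_nonneg hr.le (sub_nonneg.2 hmean)) (by linarith)
  exact (poincareInequality_of_le_hessian hr hV hVint fun x v =>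
      (mul_le_mul_of_nonneg_right (hrρ x) (sq_nonneg _)).trans (hHess x v))
    |>.schrodingerGap hr hδ hρ hrρ hρδ
    |>.poincareInequality hΛ hV hVint hρint.locallyIntegrable hHess

end BakryEmery

section Constants

theorem mul_one_sub_sqrt_nonneg {A : ℝ} (hA : 0 ≤ A) (x : ℝ) :
    0 ≤ A * (1 - √(1 - x ^ 2 / A ^ 2)) :=
  mul_nonneg hA <| sub_nonneg.2 <| sqrt_le_one.2 <| sub_le_self 1 (by positivity)

theorem mul_one_sub_sqrt_le {A x y : ℝ} (hA : 0 < A) (h : x ^ 2 + y ^ 2 ≤ 2 * A * y) :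
    A * (1 - √(1 - x ^ 2 / A ^ 2)) ≤ y := by
  have hsqrt : 1 - y / A ≤ √(1 - x ^ 2 / A ^ 2) := le_sqrt_of_sq_le <| by
    field_simp
    linarith
  calc A * (1 - √(1 - x ^ 2 / A ^ 2)) ≤ A * (y / A) := by gcongr; linarith
    _ = y := mul_div_cancel₀ y hA.ne'

/- The difference of the two sides is `(x - y) ^ 2 - 2 * (δ ^ 2 / ρ₀) * y` for `x = m - ρ₀`, and
`x - y = (m - r) * (m - r + δ) / (m + δ)` while `ρ₀ * (m - r) / (m + δ) ≤ y`. -/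
theorem sq_add_sq_le_of_curvature_bounds {r m δ ρ₀ : ℝ} (hρ₀ : 0 < ρ₀) (hr : ρ₀ ≤ r)
    (hrm : r ≤ m) (hmδ : m ≤ r + δ) :
    (m - ρ₀) ^ 2 + (r + r * (m - r) / (m + δ) - ρ₀) ^ 2 ≤
      2 * (m - ρ₀ + δ ^ 2 / ρ₀) * (r + r * (m - r) / (m + δ) - ρ₀) := by
  obtain ⟨a, ha, rfl⟩ : ∃ a, 0 ≤ a ∧ m = r + a := ⟨m - r, sub_nonneg.2 hrm, by ring⟩
  have haδ : a ≤ δ := by linarith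
  set s := r + a + δ with hs
  have hs₀ : 0 < s := by linarith
  set y := r + r * (r + a - r) / s - ρ₀ with hy
  have hdiff : r + a - ρ₀ - y = a * (a + δ) / s := by
    rw [hy]
    field_simp
    rw [hs]
    ring
  have hlower : ρ₀ * (a / s) ≤ y := by
    have : ρ₀ * (a / s) ≤ r * (a / s) := by gcongr
    rw [hy, add_sub_cancel_left, mul_div_assoc]
    linarith
  have hcubic : (a * (a + δ) / s) ^ 2 ≤ 2 * δ ^ 2 * (a / s) := by
    have hquad : a * (a + δ) ≤ 2 * δ ^ 2 := by nlinarith [mul_le_mul haδ haδ ha (ha.trans haδ)]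
    have hle : a * (a + δ) * (a + δ) ≤ 2 * δ ^ 2 * s :=
      mul_le_mul hquad (by linarith) (by linarith) (by positivity)
    rw [div_pow, mul_div_assoc', div_le_div_iff₀ (by positivity) hs₀]
    calc (a * (a + δ)) ^ 2 * s = a * s * (a * (a + δ) * (a + δ)) := by ring
      _ ≤ a * s * (2 * δ ^ 2 * s) := by gcongr
      _ = 2 * δ ^ 2 * a * s ^ 2 := by ring
  have hsq : (r + a - ρ₀ - y) ^ 2 ≤ 2 * (δ ^ 2 / ρ₀) * y :=
    calc (r + a - ρ₀ - y) ^ 2 ≤ 2 * δ ^ 2 * (a / s) := by rwa [hdiff]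
      _ = 2 * (δ ^ 2 / ρ₀) * (ρ₀ * (a / s)) := by field_simp
      _ ≤ 2 * (δ ^ 2 / ρ₀) * y := by gcongr
  linarith

theorem add_mul_one_sub_sqrt_le_of_curvature_bounds {r m δ ρ₀ : ℝ} (hρ₀ : 0 < ρ₀) (hr : ρ₀ ≤ r)
    (hrm : r ≤ m) (hmδ : m ≤ r + δ) (hA : 0 < m - ρ₀ + δ ^ 2 / ρ₀) :
    ρ₀ + (m - ρ₀ + δ ^ 2 / ρ₀) * (1 - √(1 - (m - ρ₀) ^ 2 / (m - ρ₀ + δ ^ 2 / ρ₀) ^ 2)) ≤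
      r + r * (m - r) / (m + δ) :=
  le_sub_iff_add_le'.1 <|
    mul_one_sub_sqrt_le hA (sq_add_sq_le_of_curvature_bounds hρ₀ hr hrm hmδ)

end Constants

theorem stmt_0_general {E : Type*} [NormedAddCommGroup E] [InnerProductSpace ℝ E]
    [FiniteDimensional ℝ E] [MeasurableSpace E] [BorelSpace E] (V ρ : E → ℝ)
    (hV : ContDiff ℝ 2 V) (hVint : Integrable fun x => exp (-V x)) (μ : Measure E)
    (hμ : μ = volume.withDensity fun x => ENNReal.ofReal (exp (-V x) / ∫ y, exp (-V y)))
    (hρmeas : Measurable ρ) (hρbdd : ∃ M, ∀ x, |ρ x| ≤ M)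
    (hHess : ∀ x u, ρ x * ‖u‖ ^ 2 ≤ iteratedFDeriv ℝ 2 V x ![u, u])
    (ρ₀ : ℝ) (hρ₀pos : 0 < ρ₀) (hρ₀ : ∀ x, ρ₀ ≤ ρ x)
    (Osc : ℝ) (hOscdef : Osc = (⨆ x, ρ x) - ⨅ x, ρ x) (hOscpos : 0 < Osc)
    (m : ℝ) (hm : m = ∫ x, ρ x ∂μ) (ε' : ℝ)
    (hε' : ε' = (m - ρ₀ + Osc ^ 2 / ρ₀) *
      (1 - √(1 - (m - ρ₀) ^ 2 / (m - ρ₀ + Osc ^ 2 / ρ₀) ^ 2))) (f : E → ℝ)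
    (hf : ContDiff ℝ (⊤ : ℕ∞) f) (hs : HasCompactSupport f) :
    ∫ x, f x ^ 2 ∂μ - (∫ x, f x ∂μ) ^ 2 ≤ 1 / (ρ₀ + ε') * ∫ x, ‖∇ f x‖ ^ 2 ∂μ := by
  have hgibbs : μ = gibbsMeasure V := hμ
  have : IsProbabilityMeasure μ := hgibbs ▸ isProbabilityMeasure_tilted hVint
  obtain ⟨M, hM⟩ := hρbdd
  have hbelow : BddBelow (range ρ) := ⟨ρ₀, forall_mem_range.2 hρ₀⟩
  have habove : BddAbove (range ρ) := ⟨M, forall_mem_range.2 fun x => (le_abs_self _).trans (hM x)⟩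
  set r := ⨅ x, ρ x
  have hr : ρ₀ ≤ r := le_ciInf hρ₀
  have hrρ (x) : r ≤ ρ x := ciInf_le hbelow x
  have hρδ (x) : ρ x ≤ r + Osc := by linarith [le_ciSup habove x]
  have hρint : Integrable ρ μ := .of_bound hρmeas.aestronglyMeasurable M (ae_of_all _ hM)
  have hrm : r ≤ m := by simpa [hm] using integral_mono (integrable_const r) hρint hrρ
  have hmδ : m ≤ r + Osc := by
    simpa [hm] using integral_mono hρint (integrable_const (r + Osc)) hρδ
  have hA : 0 < m - ρ₀ + Osc ^ 2 / ρ₀ :=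
    add_pos_of_nonneg_of_pos (by linarith) (by positivity)
  have hε'₀ : 0 ≤ ε' := hε' ▸ mul_one_sub_sqrt_nonneg hA.le _
  have hε'le : ρ₀ + ε' ≤ r + r * (m - r) / (m + Osc) :=
    hε' ▸ add_mul_one_sub_sqrt_le_of_curvature_bounds hρ₀pos hr hrm hmδ hA
  have hP : PoincareInequality μ (1 / (r + r * (m - r) / (m + Osc))) := by
    subst hm hgibbs
    exact poincareInequality_of_variable_curvature (hρ₀pos.trans_le hr) hOscpos hV hVint
      hρmeas.aestronglyMeasurable
      (fun x v => by simpa [iteratedFDeriv_two_apply] using hHess x v) hrρ hρδ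
  have hvar := hP.mono (one_div_le_one_div_of_le (by positivity) hε'le) f ⟨hf, hs⟩
  rwa [ProbabilityTheory.variance_eq_sub
    (hf.continuous.memLp_of_hasCompactSupport hs)] at hvar

end SelfImprovedBakryEmery

/-- Self-improved Bakry–Émery bound for the Poincaré constant under a
variable positive curvature lower bound, oscillation version. -/
theorem stmt_0 {n : ℕ} (V ρ : EuclideanSpace ℝ (Fin n) → ℝ)
    (hV : ContDiff ℝ 2 V)
    (hVint : Integrable (fun x => Real.exp (-V x)))
    (μ : Measure (EuclideanSpace ℝ (Fin n)))
    (hμ : μ = volume.withDensity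
      (fun x => ENNReal.ofReal (Real.exp (-V x) / ∫ y, Real.exp (-V y))))
    (hρcont : Continuous ρ) (hρbdd : ∃ M, ∀ x, |ρ x| ≤ M)
    (hHess : ∀ x u, ρ x * ‖u‖ ^ 2 ≤ iteratedFDeriv ℝ 2 V x ![u, u])
    (ρ₀ : ℝ) (hρ₀pos : 0 < ρ₀) (hρ₀ : ∀ x, ρ₀ ≤ ρ x)
    (Osc : ℝ) (hOscdef : Osc = (⨆ x, ρ x) - (⨅ x, ρ x)) (hOscpos : 0 < Osc)
    (m : ℝ) (hm : m = ∫ x, ρ x ∂μ)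
    (ε' : ℝ)
    (hε' : ε' = ((m - ρ₀) + Osc ^ 2 / ρ₀) *
      (1 - Real.sqrt (1 - (m - ρ₀) ^ 2 / ((m - ρ₀) + Osc ^ 2 / ρ₀) ^ 2))) :
    ∀ f : EuclideanSpace ℝ (Fin n) → ℝ, ContDiff ℝ (⊤ : ℕ∞) f → HasCompactSupport f →
      ∫ x, f x ^ 2 ∂μ - (∫ x, f x ∂μ) ^ 2 ≤
        (1 / (ρ₀ + ε')) * ∫ x, ‖gradient f x‖ ^ 2 ∂μ :=
  stmt_0_general V ρ hV hVint μ hμ hρcont.measurable hρbdd hHess ρ₀ hρ₀pos hρ₀ Osc hOscdef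
    hOscpos m hm ε' hε'
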